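/- arXiv:1911.06225 — 2 statements merged into one kernel-verified Lean document; each statement's English description precedes it below -/
import Mathlib

section
/- Let F be the distribution function of a probability measure on ℝ satisfying Condition A. Then the map θ ↦ L(θ; F) = sup_{ψ ∈ SC₀} Ψ(θ, ψ, F) is continuous on ℝ. -/
open MeasureTheory Filter Set
open scoped ENNReal NNReal

noncomputable section

/-- `exp` of an extended real number, valued in `ℝ≥0∞`. -/
def expE (y : EReal) : ℝ≥0∞ :=
  if y = ⊥ then 0 else if y = ⊤ then ⊤ else ENNReal.ofReal (Real.exp y.toReal)

/-- Truncation of an extended real number to `ℝ≥0∞` (negative values go to `0`). -/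
def toENN (y : EReal) : ℝ≥0∞ :=
  if y = ⊤ then ⊤ else ENNReal.ofReal y.toReal

/-- Signed (upper-minus-lower) integral of an `EReal`-valued function against a measure. -/
def eIntegral (μ : Measure ℝ) (ψ : ℝ → EReal) : EReal :=
  ((∫⁻ x, toENN (ψ x) ∂μ : ℝ≥0∞) : EReal) - ((∫⁻ x, toENN (-(ψ x)) ∂μ : ℝ≥0∞) : EReal)

/-- Concavity for `EReal`-valued functions on `ℝ`. -/
def EConcave (ψ : ℝ → EReal) : Prop :=
  ∀ x y : ℝ, ∀ t : ℝ, 0 ≤ t → t ≤ 1 →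
    ((t : EReal) * ψ x + (((1 - t) : ℝ) : EReal) * ψ y) ≤ ψ (t * x + (1 - t) * y)

/-- The class `SC₀` of proper, closed (upper semicontinuous), concave functions
`ℝ → [−∞, ∞)` that are symmetric about `0`. -/
def memSC0 (ψ : ℝ → EReal) : Prop :=
  (∀ x, ψ x < ⊤) ∧ (∃ x, ψ x ≠ ⊥) ∧ UpperSemicontinuous ψ ∧ EConcave ψ ∧ ∀ x, ψ (-x) = ψ x

/-- The criterion function `Ψ(θ, ψ, F) = ∫ ψ(x − θ) dμ(x) − ∫ e^{ψ(x)} dx`. -/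
def Psi (θ : ℝ) (ψ : ℝ → EReal) (μ : Measure ℝ) : EReal :=
  eIntegral μ (fun x => ψ (x - θ)) - ((∫⁻ x, expE (ψ x) : ℝ≥0∞) : EReal)

/-- `L(θ; F) = sup_{ψ ∈ SC₀} Ψ(θ, ψ, F)`. -/
def Ltheta (θ : ℝ) (μ : Measure ℝ) : EReal :=
  ⨆ ψ ∈ {ψ : ℝ → EReal | memSC0 ψ}, Psi θ ψ μ

/-- `L(F) = sup_{θ ∈ ℝ, ψ ∈ SC₀} Ψ(θ, ψ, F)`. -/
def Lsup (μ : Measure ℝ) : EReal := ⨆ θ : ℝ, Ltheta θ μ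

/-- Condition A: `μ` is a probability measure that is not a point mass,
with a finite first absolute moment. -/
def CondA (μ : Measure ℝ) : Prop :=
  IsProbabilityMeasure μ ∧ (∀ x : ℝ, μ ≠ Measure.dirac x) ∧
    (∫⁻ x, ENNReal.ofReal |x| ∂μ) < ⊤

/-- The empirical measure of the data `X₁, …, Xₙ`. -/
def empMeas {n : ℕ} (X : Fin n → ℝ) : Measure ℝ :=
  ((n : ℝ≥0∞))⁻¹ • ∑ i : Fin n, Measure.dirac (X i)

/-- The empirical measure of the first `n` entries of a sequence. -/
def empSeq (X : ℕ → ℝ) (n : ℕ) : Measure ℝ :=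
  ((n : ℝ≥0∞))⁻¹ • ∑ i ∈ Finset.range n, Measure.dirac (X i)

/-- The density `e^ψ` as a real-valued function. -/
def gReal (ψ : ℝ → EReal) (x : ℝ) : ℝ := (expE (ψ x)).toReal

/-- A knot of a concave function `ψ`: a point where the left and right derivatives
differ, or a boundary point of `dom ψ = {ψ > −∞}`. -/
def IsKnot (ψ : ℝ → EReal) (x : ℝ) : Prop :=
  x ∈ frontier {y : ℝ | ψ y ≠ ⊥} ∨
    derivWithin (fun y => (ψ y).toReal) (Set.Iio x) x ≠
      derivWithin (fun y => (ψ y).toReal) (Set.Ioi x) x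

/-- The class `𝒞` of proper closed concave functions `ℝ → [−∞, ∞)`. -/
def memC (φ : ℝ → EReal) : Prop :=
  (∀ x, φ x < ⊤) ∧ (∃ x, φ x ≠ ⊥) ∧ UpperSemicontinuous φ ∧ EConcave φ

/-- The criterion function `ω(φ, F) = ∫ φ dμ − ∫ e^{φ(x)} dx`. -/
def omegaF (φ : ℝ → EReal) (μ : Measure ℝ) : EReal :=
  eIntegral μ φ - ((∫⁻ x, expE (φ x) : ℝ≥0∞) : EReal)

/-- `(θ, ψ)` maximizes `Ψ(·, ·, μ)` over `ℝ × SC₀`. -/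
def IsMaximizer (θ : ℝ) (ψ : ℝ → EReal) (μ : Measure ℝ) : Prop :=
  memSC0 ψ ∧ ∀ (θ' : ℝ) (ψ' : ℝ → EReal), memSC0 ψ' → Psi θ' ψ' μ ≤ Psi θ ψ μ

/-- Condition B: the `θ`-component of a maximizer of `Ψ(·, ·, μ)` is unique. -/
def CondB (μ : Measure ℝ) : Prop :=
  ∀ (θ₁ θ₂ : ℝ) (ψ₁ ψ₂ : ℝ → EReal),
    IsMaximizer θ₁ ψ₁ μ → IsMaximizer θ₂ ψ₂ μ → θ₁ = θ₂

/-- `J(F) = {x : 0 < F(x) < 1}`. -/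
def Jset (μ : Measure ℝ) : Set ℝ := {x : ℝ | 0 < μ (Set.Iic x) ∧ μ (Set.Iic x) < 1}

/-- The Hellinger distance between two densities. -/
def Hdist (f g : ℝ → ℝ) : ℝ :=
  Real.sqrt ((1 / 2) * ∫ x, (Real.sqrt (f x) - Real.sqrt (g x)) ^ 2)

/-- Finite Fisher information for location: `g` is a.e. differentiable with
square-integrable score. -/
def FiniteFisher (g : ℝ → ℝ) : Prop :=
  ∃ D : ℝ → ℝ, (∀ᵐ x : ℝ, HasDerivAt g (D x) x) ∧
    (∫⁻ x, ENNReal.ofReal ((D x) ^ 2 / g x)) < ⊤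

/-- The symmetrization `μ^{sym}_θ = (μ + R_θ#μ)/2` of a measure about `θ`. -/
def symMeas (θ : ℝ) (μ : Measure ℝ) : Measure ℝ :=
  ((2 : ℝ≥0∞))⁻¹ • (μ + Measure.map (fun x => 2 * θ - x) μ)

end

/-!
Call `η` the distance `|θ' - θ|`. Replacing `ψ ∈ SC₀` by its supremum over windows of radius `η`
keeps it in `SC₀`, makes `ψ(· - θ)` smaller than the widened function centred at `θ'`, and raises
`∫ e^ψ` by exactly `2 η e^{ψ(0)}`; hence `Ψ(θ, ψ, F) ≤ L(θ'; F) + 2 η e^{ψ(0)}`. Lower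
semicontinuity at `θ₀` follows by fixing `ψ`. For upper semicontinuity one needs `ψ(0)` to stay
bounded along near-maximizers as `θ → θ₀`. If `F` charges `{r ≤ |x - θ|}` uniformly in `θ`, then
`∫ ψ(x - θ) dF` forces `ψ(0) - ψ(r)` to grow at most linearly in `ψ(0)`, so by concavity `∫ e^ψ` is
at least of order `e^{ψ(0)} / ψ(0)`, which no near-maximizer can afford for large `ψ(0)`. If on the
contrary `F ≠ 0` is concentrated at `θ₀`, functions supported at the origin alone give
`L(θ₀; F) = ∞`, and upper semicontinuity at `θ₀` is automatic.
-/

section ExtendedReal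

theorem expE_eq_exp : expE = EReal.exp := by
  funext y
  induction y using EReal.rec <;> simp [expE]

theorem toENN_eq_toENNReal : toENN = EReal.toENNReal := rfl

theorem ereal_sub_le_sub_add {A A' B B' : EReal} {k : ℝ} (hA : A ≤ A') (hB : B' ≤ B + k) :
    A - B ≤ A' - B' + k :=
  calc A - B ≤ A' - (B' - k) := EReal.sub_le_sub hA (EReal.sub_le_of_le_add hB)
    _ = A' - B' + k := by
      rw [sub_eq_add_neg A', EReal.neg_sub (by simp) (by simp), ← add_assoc, ← sub_eq_add_neg]

theorem tendsto_add_coe_of_tendsto_zero {α : Type*} {l : Filter α} {f : α → ℝ}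
    (hf : Tendsto f l (nhds 0)) (y : EReal) :
    Tendsto (fun a => y + (f a : EReal)) l (nhds y) := by
  have hcont : ContinuousAt (fun p : EReal × EReal => p.1 + p.2) (y, ((0 : ℝ) : EReal)) :=
    EReal.continuousAt_add (by simp) (by simp)
  simpa [Function.comp_def] using hcont.tendsto.comp
    (tendsto_const_nhds.prodMk_nhds (EReal.tendsto_coe.2 hf))

end ExtendedReal

section SignedIntegral

variable {μ : Measure ℝ}

theorem eIntegral_mono_ae {f g : ℝ → EReal} (h : f ≤ᵐ[μ] g) : eIntegral μ f ≤ eIntegral μ g := by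
  unfold eIntegral
  rw [toENN_eq_toENNReal]
  apply EReal.sub_le_sub <;> norm_cast <;> apply lintegral_mono_ae <;> filter_upwards [h] with x hx
  · exact EReal.toENNReal_le_toENNReal hx
  · exact EReal.toENNReal_le_toENNReal (EReal.neg_le_neg_iff.2 hx)

theorem eIntegral_congr_ae {f g : ℝ → EReal} (h : f =ᵐ[μ] g) : eIntegral μ f = eIntegral μ g :=
  le_antisymm (eIntegral_mono_ae h.le) (eIntegral_mono_ae h.symm.le)

theorem eIntegral_coe {g : ℝ → ℝ} (hg : Integrable g μ) :
    eIntegral μ (fun x => (g x : EReal)) = ((∫ x, g x ∂μ : ℝ) : EReal) := by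
  have hneg : ∫⁻ x, ENNReal.ofReal (-g x) ∂μ ≠ ⊤ := hg.neg.lintegral_lt_top.ne
  rw [integral_eq_lintegral_pos_part_sub_lintegral_neg_part hg, EReal.coe_sub,
    EReal.coe_ennreal_toReal hg.lintegral_lt_top.ne, EReal.coe_ennreal_toReal hneg]
  simp only [eIntegral, toENN_eq_toENNReal, ← EReal.coe_neg, EReal.real_coe_toENNReal]

theorem Psi_le_eIntegral (θ : ℝ) (ψ : ℝ → EReal) : Psi θ ψ μ ≤ eIntegral μ fun x => ψ (x - θ) :=
  EReal.sub_le_of_le_add (le_add_of_nonneg_right (EReal.coe_ennreal_nonneg _))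

end SignedIntegral

section RadialIntegral

theorem lintegral_comp_abs_eq_two_mul (g : ℝ → ℝ≥0∞) :
    ∫⁻ x, g |x| = 2 * ∫⁻ x in Ioi 0, g x := by
  have hpos : ∫⁻ x in Ioi (0 : ℝ), g |x| = ∫⁻ x in Ioi 0, g x :=
    setLIntegral_congr_fun measurableSet_Ioi fun x hx => by simp only [abs_of_pos (mem_Ioi.1 hx)]
  have hneg : ∫⁻ x in Iio (0 : ℝ), g |x| = ∫⁻ x in Ioi 0, g |x| := by
    simpa using (Measure.measurePreserving_neg (volume : Measure ℝ)).setLIntegral_comp_preimage_emb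
      (MeasurableEquiv.neg ℝ).measurableEmbedding (fun x => g |x|) (Ioi 0)
  rw [← lintegral_add_compl _ measurableSet_Ioi, compl_Ioi, setLIntegral_congr Iio_ae_eq_Iic.symm,
    hneg, hpos, two_mul]

theorem lintegral_comp_abs_sub_max (g : ℝ → ℝ≥0∞) {η : ℝ} (hη : 0 ≤ η) :
    ∫⁻ x, g (max (|x| - η) 0) = (∫⁻ x, g |x|) + 2 * (ENNReal.ofReal η * g 0) := by
  have hnear : ∫⁻ x in Ioc 0 η, g (max (x - η) 0) = ENNReal.ofReal η * g 0 := by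
    rw [setLIntegral_congr_fun (g := fun _ => g 0) measurableSet_Ioc
      fun x hx => by simp only [max_eq_right (sub_nonpos.2 hx.2)], setLIntegral_const,
      Real.volume_Ioc, sub_zero, mul_comm]
  have hfar : ∫⁻ x in Ioi η, g (max (x - η) 0) = ∫⁻ x in Ioi 0, g x := by
    rw [setLIntegral_congr_fun (g := fun x => g (x - η)) measurableSet_Ioi
      fun x hx => by simp only [max_eq_left (sub_nonneg.2 (mem_Ioi.1 hx).le)]]
    simpa using (measurePreserving_sub_right volume η).setLIntegral_comp_preimage_emb
      (measurableEmbedding_subRight η) g (Ioi 0)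
  rw [lintegral_comp_abs_eq_two_mul fun x => g (max (x - η) 0), lintegral_comp_abs_eq_two_mul,
    ← Ioc_union_Ioi_eq_Ioi hη, lintegral_union measurableSet_Ioi (Ioc_disjoint_Ioi le_rfl), hnear,
    hfar, Ioc_union_Ioi_eq_Ioi hη, mul_add, add_comm]

end RadialIntegral

theorem EConcave.coe_le_apply {ψ : ℝ → EReal} (hψ : EConcave ψ) {a b t x y : ℝ}
    (hx : (a : EReal) ≤ ψ x) (hy : (b : EReal) ≤ ψ y) (ht0 : 0 ≤ t) (ht1 : t ≤ 1) :
    ((t * a + (1 - t) * b : ℝ) : EReal) ≤ ψ (t * x + (1 - t) * y) := by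
  refine le_trans ?_ (hψ x y t ht0 ht1)
  push_cast
  have h1 : (0 : EReal) ≤ t := by exact_mod_cast ht0
  have h2 : (0 : EReal) ≤ ((1 - t : ℝ) : EReal) := by exact_mod_cast sub_nonneg.2 ht1
  exact add_le_add (mul_le_mul_of_nonneg_left hx h1) (mul_le_mul_of_nonneg_left hy h2)

namespace memSC0

variable {ψ : ℝ → EReal}

theorem le_of_abs_le (h : memSC0 ψ) {x y : ℝ} (hxy : |x| ≤ |y|) : ψ y ≤ ψ x := by
  obtain ⟨hlt, -, -, hconc, hsymm⟩ := h
  rcases eq_or_ne y 0 with rfl | hy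
  · rw [abs_zero, abs_nonpos_iff] at hxy
    rw [hxy]
  rcases eq_or_ne (ψ y) ⊥ with hbot | hbot
  · exact hbot ▸ bot_le
  have hcoe : ((ψ y).toReal : EReal) = ψ y := EReal.coe_toReal (hlt y).ne hbot
  have hratio : |x / y| ≤ 1 := by
    rw [abs_div]
    exact (div_le_one (abs_pos.2 hy)).2 hxy
  obtain ⟨hlower, hupper⟩ := abs_le.1 hratio
  have hchord := hconc.coe_le_apply hcoe.le (hcoe.trans (hsymm y).symm).le
    (t := (1 + x / y) / 2) (by linarith) (by linarith)
  have hx : (1 + x / y) / 2 * y + (1 - (1 + x / y) / 2) * -y = x := by field_simp; ring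
  rwa [hx, ← add_mul, add_sub_cancel, one_mul, hcoe] at hchord

theorem le_apply_zero (h : memSC0 ψ) (x : ℝ) : ψ x ≤ ψ 0 :=
  h.le_of_abs_le (by simp)

theorem exists_apply_zero_eq_coe (h : memSC0 ψ) : ∃ m : ℝ, ψ 0 = m := by
  obtain ⟨x, hx⟩ := h.2.1
  exact ⟨_, (EReal.coe_toReal (h.1 0).ne
    (bot_lt_iff_ne_bot.2 hx |>.trans_le (h.le_apply_zero x)).ne').symm⟩

end memSC0

/-- The supremum `x ↦ sup_{|y - x| ≤ η} ψ y` of a function `ψ ∈ SC₀` over windows of radius `η`,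
written in closed form using that `ψ` is even and decreasing in `|x|`. -/
def widen (η : ℝ) (ψ : ℝ → EReal) : ℝ → EReal := fun x => ψ (max (|x| - η) 0)

theorem convexOn_max_abs_sub (η : ℝ) : ConvexOn ℝ univ fun x : ℝ => max (|x| - η) 0 :=
  ((convexOn_norm convex_univ).add_const (-η)).sup (convexOn_const 0 convex_univ)

theorem memSC0_widen {ψ : ℝ → EReal} {η : ℝ} (h : memSC0 ψ) (hη : 0 ≤ η) :
    memSC0 (widen η ψ) := by
  obtain ⟨m, hm⟩ := h.exists_apply_zero_eq_coe
  refine ⟨fun x => h.1 _, ⟨0, by simp [widen, hη, hm]⟩,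
    h.2.2.1.comp (g := fun x : ℝ => max (|x| - η) 0) (by fun_prop), fun x y t ht0 ht1 => ?_,
    fun x => by simp only [widen, abs_neg]⟩
  refine (h.2.2.2.1 _ _ t ht0 ht1).trans (h.le_of_abs_le ?_)
  rw [abs_of_nonneg (le_max_right _ _)]
  exact ((convexOn_max_abs_sub η).2 (mem_univ x) (mem_univ y) ht0 (sub_nonneg.2 ht1)
    (by ring)).trans (le_abs_self _)

namespace memSC0

variable {ψ : ℝ → EReal} {η : ℝ}

theorem apply_le_widen (h : memSC0 ψ) {x y : ℝ} (hxy : |y - x| ≤ η) : ψ x ≤ widen η ψ y := by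
  refine h.le_of_abs_le ?_
  rw [abs_of_nonneg (le_max_right _ _)]
  exact max_le (by linarith [abs_sub_abs_le_abs_sub y x]) (abs_nonneg x)

theorem apply_abs (h : memSC0 ψ) (x : ℝ) : ψ |x| = ψ x :=
  le_antisymm (h.le_of_abs_le (abs_abs x).ge) (h.le_of_abs_le (abs_abs x).le)

theorem lintegral_expE_widen (h : memSC0 ψ) (hη : 0 ≤ η) :
    ∫⁻ x, expE (widen η ψ x) =
      (∫⁻ x, expE (ψ x)) + 2 * (ENNReal.ofReal η * expE (ψ 0)) := by
  simpa only [widen, h.apply_abs] using lintegral_comp_abs_sub_max (fun x => expE (ψ x)) hη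

theorem lintegral_expE_widen_le (h : memSC0 ψ) (hη : 0 ≤ η) {m : ℝ} (hm : ψ 0 ≤ m) :
    ((∫⁻ x, expE (widen η ψ x) : ℝ≥0∞) : EReal) ≤
      (∫⁻ x, expE (ψ x) : ℝ≥0∞) + ((2 * (η * Real.exp m) : ℝ) : EReal) := by
  have hcost : 2 * (ENNReal.ofReal η * expE (ψ 0)) ≤
      ENNReal.ofReal (2 * (η * Real.exp m)) := by
    rw [ENNReal.ofReal_mul zero_le_two, ENNReal.ofReal_mul hη, ENNReal.ofReal_ofNat,
      ← EReal.exp_coe, expE_eq_exp]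
    gcongr
  rw [h.lintegral_expE_widen hη, EReal.coe_ennreal_add]
  gcongr
  refine (EReal.coe_ennreal_le_coe_ennreal_iff.2 hcost).trans_eq ?_
  rw [EReal.coe_ennreal_ofReal, max_eq_left (by positivity)]

theorem Psi_le_Ltheta_add (h : memSC0 ψ) (μ : Measure ℝ) {m : ℝ} (hm : ψ 0 ≤ m) (θ θ' : ℝ) :
    Psi θ ψ μ ≤ Ltheta θ' μ + ((2 * (|θ' - θ| * Real.exp m) : ℝ) : EReal) := by
  have hint : eIntegral μ (fun x => ψ (x - θ)) ≤
      eIntegral μ (fun x => widen |θ' - θ| ψ (x - θ')) :=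
    eIntegral_mono_ae (ae_of_all _ fun x => h.apply_le_widen (by
      rw [sub_sub_sub_cancel_left, abs_sub_comm]))
  calc Psi θ ψ μ
      ≤ Psi θ' (widen |θ' - θ| ψ) μ + ((2 * (|θ' - θ| * Real.exp m) : ℝ) : EReal) :=
        ereal_sub_le_sub_add hint (h.lintegral_expE_widen_le (abs_nonneg _) hm)
    _ ≤ Ltheta θ' μ + ((2 * (|θ' - θ| * Real.exp m) : ℝ) : EReal) := by
        gcongr
        exact le_iSup₂_of_le (widen |θ' - θ| ψ) (memSC0_widen h (abs_nonneg _)) le_rfl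

end memSC0

theorem tendsto_abs_sub_mul_exp (θ₀ m : ℝ) :
    Tendsto (fun θ => 2 * (|θ - θ₀| * Real.exp m)) (nhds θ₀) (nhds 0) := by
  have hcont : Continuous fun θ => 2 * (|θ - θ₀| * Real.exp m) := by fun_prop
  simpa using hcont.tendsto θ₀

theorem lowerSemicontinuous_Ltheta (μ : Measure ℝ) :
    LowerSemicontinuous fun θ => Ltheta θ μ := by
  intro θ₀ c hc
  obtain ⟨ψ, hψ, hlt⟩ : ∃ ψ, memSC0 ψ ∧ c < Psi θ₀ ψ μ := by
    simpa only [Ltheta, lt_iSup_iff, mem_ofPred_eq, exists_prop] using hc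
  obtain ⟨m, hm⟩ := hψ.exists_apply_zero_eq_coe
  have hlim : Tendsto (fun θ => -(2 * (|θ - θ₀| * Real.exp m))) (nhds θ₀) (nhds 0) := by
    simpa using (tendsto_abs_sub_mul_exp θ₀ m).neg
  filter_upwards [(tendsto_add_coe_of_tendsto_zero hlim _).eventually_const_lt hlt] with θ hθ
  refine hθ.trans_le ?_
  rw [EReal.coe_neg, ← sub_eq_add_neg]
  exact EReal.sub_le_of_le_add (hψ.Psi_le_Ltheta_add μ hm.le θ₀ θ)

theorem exists_forall_le_of_mul_exp_lt_eval (p : Polynomial ℝ) {K : ℝ} (hK : 0 < K) :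
    ∃ M, ∀ m, K * Real.exp m < p.eval m → m ≤ M := by
  obtain ⟨M, hM⟩ := eventually_atTop.1 ((p.tendsto_div_exp_atTop).eventually_lt_const hK)
  refine ⟨M, fun m hm => ?_⟩
  by_contra! hlt
  exact hm.not_gt ((div_lt_iff₀ (Real.exp_pos m)).1 (hM m hlt.le))

namespace memSC0

variable {ψ : ℝ → EReal} {m r : ℝ}

theorem ofReal_le_lintegral_expE (h : memSC0 ψ) {a ρ : ℝ} (ha : (a : EReal) ≤ ψ ρ) :
    ENNReal.ofReal (2 * ρ * Real.exp a) ≤ ∫⁻ x, expE (ψ x) :=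
  calc ENNReal.ofReal (2 * ρ * Real.exp a)
      = ∫⁻ _ in Icc (-ρ) ρ, expE a := by
        rw [setLIntegral_const, Real.volume_Icc, expE_eq_exp, EReal.exp_coe, mul_comm,
          ENNReal.ofReal_mul (Real.exp_pos a).le, sub_neg_eq_add, two_mul]
    _ ≤ ∫⁻ x in Icc (-ρ) ρ, expE (ψ x) := by
        refine setLIntegral_mono' measurableSet_Icc fun x hx => ?_
        rw [expE_eq_exp]
        exact EReal.exp_monotone (ha.trans (h.le_of_abs_le ((abs_le.2 hx).trans (le_abs_self ρ))))
    _ ≤ ∫⁻ x, expE (ψ x) := setLIntegral_le_lintegral _ _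

theorem sub_one_le_apply_div (h : memSC0 ψ) {d : ℝ} (hd : 0 ≤ d) (hm : (m : EReal) ≤ ψ 0)
    (hr : ((m - d : ℝ) : EReal) ≤ ψ r) : ((m - 1 : ℝ) : EReal) ≤ ψ (r / (1 + d)) := by
  have hd1 : 0 < 1 + d := by positivity
  have hchord := h.2.2.2.1.coe_le_apply hr hm (t := 1 / (1 + d)) (by positivity)
    ((div_le_one hd1).2 (by linarith))
  rw [mul_zero, add_zero, one_div_mul_eq_div (1 + d) r] at hchord
  refine le_trans (EReal.coe_le_coe_iff.2 ?_) hchord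
  have hdrop : 1 / (1 + d) * d ≤ 1 := by
    rw [one_div_mul_eq_div]
    exact (div_le_one hd1).2 (by linarith)
  linarith

variable {μ : Measure ℝ} [IsFiniteMeasure μ] {θ c ε : ℝ}

theorem eIntegral_le_sub_mul_measureReal (h : memSC0 ψ) {s : ℝ} (hr : 0 ≤ r) (hm : ψ 0 ≤ m)
    (hs : ψ r ≤ s) :
    eIntegral μ (fun x => ψ (x - θ)) ≤
      ((m * μ.real univ - (m - s) * μ.real {x | r ≤ |x - θ|} : ℝ) : EReal) := by
  set tail : Set ℝ := {x | r ≤ |x - θ|}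
  have hmeas : MeasurableSet tail := measurableSet_le (by fun_prop) (by fun_prop)
  have hint : Integrable (tail.indicator fun _ => m - s) μ :=
    (integrable_const _).indicator hmeas
  have hle : ∀ x, ψ (x - θ) ≤ ((m - tail.indicator (fun _ => m - s) x : ℝ) : EReal) := by
    intro x
    by_cases hx : x ∈ tail
    · rw [indicator_of_mem hx, sub_sub_cancel]
      exact (h.le_of_abs_le ((abs_of_nonneg hr).trans_le hx)).trans hs
    · rw [indicator_of_notMem hx, sub_zero]
      exact (h.le_apply_zero _).trans hm
  refine (eIntegral_mono_ae (ae_of_all _ hle)).trans_eq ?_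
  rw [eIntegral_coe (g := fun x => m - tail.indicator (fun _ => m - s) x)
    ((integrable_const m).sub hint), integral_sub (integrable_const m) hint,
    integral_indicator hmeas, setIntegral_const, integral_const, smul_eq_mul, smul_eq_mul,
    mul_comm m, mul_comm (m - s)]

theorem Psi_le_mul_sub (h : memSC0 ψ) {I : ℝ} (hm : ψ 0 ≤ m)
    (hI : ENNReal.ofReal I ≤ ∫⁻ x, expE (ψ x)) :
    Psi θ ψ μ ≤ ((m * μ.real univ - I : ℝ) : EReal) := by
  have hint : eIntegral μ (fun x => ψ (x - θ)) ≤ ((m * μ.real univ : ℝ) : EReal) := by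
    simpa using h.eIntegral_le_sub_mul_measureReal (μ := μ) (θ := θ) le_rfl hm hm
  have hI' : (I : EReal) ≤ (∫⁻ x, expE (ψ x) : ℝ≥0∞) :=
    calc (I : EReal) ≤ (max I 0 : ℝ) := EReal.coe_le_coe_iff.2 (le_max_left I 0)
      _ = (ENNReal.ofReal I : EReal) := EReal.coe_ennreal_ofReal.symm
      _ ≤ (∫⁻ x, expE (ψ x) : ℝ≥0∞) := EReal.coe_ennreal_le_coe_ennreal_iff.2 hI
  rw [EReal.coe_sub]
  exact EReal.sub_le_sub hint hI'

theorem lt_mul_of_lt_Psi (h : memSC0 ψ) (hm : ψ 0 ≤ m) (hc : (c : EReal) < Psi θ ψ μ) :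
    c < m * μ.real univ := by
  have hlt := hc.trans_le (h.Psi_le_mul_sub (I := 0) hm (by simp))
  simpa only [sub_zero, EReal.coe_lt_coe_iff] using hlt

theorem sub_div_lt_apply_of_lt_Psi (h : memSC0 ψ) (hr : 0 ≤ r) (hm : ψ 0 ≤ m) (hε : 0 < ε)
    (htail : ε ≤ μ.real {x | r ≤ |x - θ|}) (hc : (c : EReal) < Psi θ ψ μ) :
    ((m - (m * μ.real univ - c) / ε : ℝ) : EReal) < ψ r := by
  by_contra! hle
  have hlt := hc.trans_le ((Psi_le_eIntegral θ ψ).trans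
    (h.eIntegral_le_sub_mul_measureReal hr hm hle))
  rw [EReal.coe_lt_coe_iff, sub_sub_cancel] at hlt
  have hgap : 0 < m * μ.real univ - c := sub_pos.2 (h.lt_mul_of_lt_Psi hm hc)
  have hloss : (m * μ.real univ - c) / ε * ε ≤
      (m * μ.real univ - c) / ε * μ.real {x | r ≤ |x - θ|} := by gcongr
  rw [div_mul_cancel₀ _ hε.ne'] at hloss
  linarith

theorem two_mul_exp_lt_of_lt_Psi (h : memSC0 ψ) (hr : 0 ≤ r) (hm : ψ 0 = m) (hε : 0 < ε)
    (htail : ε ≤ μ.real {x | r ≤ |x - θ|}) (hc : (c : EReal) < Psi θ ψ μ) :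
    2 * r * Real.exp (m - 1) < (m * μ.real univ - c) * (1 + (m * μ.real univ - c) / ε) := by
  have hdrop := h.sub_div_lt_apply_of_lt_Psi hr hm.le hε htail hc
  have hgap : 0 < m * μ.real univ - c := sub_pos.2 (h.lt_mul_of_lt_Psi hm.le hc)
  set d := (m * μ.real univ - c) / ε
  have hd : 0 < 1 + d := by positivity
  have hmass := h.ofReal_le_lintegral_expE
    (h.sub_one_le_apply_div (by positivity) hm.ge hdrop.le)
  have hlt := hc.trans_le (h.Psi_le_mul_sub hm.le hmass)
  rw [EReal.coe_lt_coe_iff, lt_sub_comm] at hlt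
  rwa [← div_lt_iff₀ hd, mul_div_right_comm, mul_div_assoc]

theorem exists_forall_apply_zero_le (μ : Measure ℝ) [IsFiniteMeasure μ] (c : ℝ) (hr : 0 < r)
    (hε : 0 < ε) : ∃ M : ℝ, ∀ (θ : ℝ) (ψ : ℝ → EReal), memSC0 ψ →
      ε ≤ μ.real {x | r ≤ |x - θ|} → (c : EReal) < Psi θ ψ μ → ψ 0 ≤ M := by
  let gap : Polynomial ℝ := .C (μ.real univ) * .X - .C c
  obtain ⟨M, hM⟩ := exists_forall_le_of_mul_exp_lt_eval (gap * (1 + gap * .C ε⁻¹))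
    (show 0 < 2 * r * Real.exp (-1) by positivity)
  refine ⟨M, fun θ ψ h htail hc => ?_⟩
  obtain ⟨m, hm⟩ := h.exists_apply_zero_eq_coe
  rw [hm, EReal.coe_le_coe_iff]
  apply hM
  simpa [gap, mul_assoc, ← Real.exp_add, div_eq_mul_inv, sub_eq_neg_add, mul_comm m] using
    h.two_mul_exp_lt_of_lt_Psi hr.le hm hε htail hc

end memSC0

section UpperSemicontinuity

variable {μ : Measure ℝ} {θ₀ : ℝ}

theorem exists_pos_measureReal_le_abs_sub [IsFiniteMeasure μ] (h : ¬ ∀ᵐ x ∂μ, x = θ₀) :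
    ∃ r > 0, 0 < μ.real {x | r ≤ |x - θ₀|} := by
  by_contra! hzero
  have hnull : ∀ r > 0, μ {x | r ≤ |x - θ₀|} = 0 := fun r hr =>
    (measureReal_eq_zero_iff).1 (le_antisymm (hzero r hr) measureReal_nonneg)
  have hae : ∀ᵐ x ∂μ, |x - θ₀| ≤ 0 := (ae_le_const_iff_forall_gt_measure_zero _ _).2 hnull
  exact h (hae.mono fun x hx => sub_eq_zero.1 (abs_nonpos_iff.1 hx))

theorem exists_eventually_apply_zero_le [IsFiniteMeasure μ] (h : ¬ ∀ᵐ x ∂μ, x = θ₀) (c : ℝ) :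
    ∃ M : ℝ, ∀ᶠ θ in nhds θ₀, ∀ ψ, memSC0 ψ → (c : EReal) < Psi θ ψ μ → ψ 0 ≤ M := by
  obtain ⟨r, hr, hpos⟩ := exists_pos_measureReal_le_abs_sub h
  obtain ⟨M, hM⟩ := memSC0.exists_forall_apply_zero_le μ c (half_pos hr) hpos
  refine ⟨M, ?_⟩
  filter_upwards [Metric.ball_mem_nhds θ₀ (half_pos hr)] with θ hθ ψ hψ
  refine hM θ ψ hψ (measureReal_mono fun x (hx : r ≤ |x - θ₀|) => ?_)
  rw [Metric.mem_ball, Real.dist_eq] at hθ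
  rw [mem_ofPred_eq]
  linarith [abs_sub_le x θ θ₀]

theorem upperSemicontinuousAt_Ltheta [IsFiniteMeasure μ] (h : ¬ ∀ᵐ x ∂μ, x = θ₀) :
    UpperSemicontinuousAt (fun θ => Ltheta θ μ) θ₀ := by
  intro b hb
  obtain ⟨c, hLc, hcb⟩ := EReal.lt_iff_exists_real_btwn.1 hb
  obtain ⟨M, hM⟩ := exists_eventually_apply_zero_le h c
  have hlim := tendsto_add_coe_of_tendsto_zero (tendsto_abs_sub_mul_exp θ₀ M) (Ltheta θ₀ μ)
  filter_upwards [hM, hlim.eventually_lt_const hLc] with θ hbound hlt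
  refine (iSup₂_le fun ψ hψ => ?_).trans_lt hcb
  by_contra! hc
  have hle := memSC0.Psi_le_Ltheta_add hψ μ (hbound ψ hψ hc) θ θ₀
  rw [abs_sub_comm] at hle
  exact (hc.trans_le hle).not_gt hlt

end UpperSemicontinuity

section PointMass

/-- The function equal to `a` at the origin and `-∞` elsewhere. It lies in `SC₀`, and `e^ψ` has
integral zero, so `a` can be raised at no cost when all the mass sits at the centre. -/
noncomputable def spike (a : ℝ) : ℝ → EReal := fun x => if x = 0 then a else ⊥

theorem eConcave_spike (a : ℝ) : EConcave (spike a) := by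
  intro x y t ht0 ht1
  rcases ht0.eq_or_lt with rfl | ht0
  · simp
  rcases ht1.eq_or_lt with rfl | ht1
  · simp
  rcases eq_or_ne x 0 with rfl | hx
  · rcases eq_or_ne y 0 with rfl | hy
    · simp only [spike, mul_zero, add_zero, if_true]
      norm_cast
      linarith
    · rw [show spike a y = ⊥ from if_neg hy, EReal.coe_mul_bot_of_pos (sub_pos.2 ht1),
        EReal.add_bot]
      exact bot_le
  · simp [spike, hx, EReal.coe_mul_bot_of_pos ht0]

theorem upperSemicontinuous_spike (a : ℝ) : UpperSemicontinuous (spike a) := by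
  rw [upperSemicontinuous_iff_isClosed_preimage]
  intro b
  rcases eq_or_ne b ⊥ with rfl | hb
  · simp
  · refine ((finite_singleton (0 : ℝ)).subset fun x hx => ?_).isClosed
    by_contra hx0
    exact hb (by simpa [spike, show x ≠ 0 from hx0] using hx)

theorem memSC0_spike (a : ℝ) : memSC0 (spike a) := by
  refine ⟨fun x => ?_, ⟨0, by simp [spike]⟩, upperSemicontinuous_spike a, eConcave_spike a,
    fun x => by simp [spike]⟩
  unfold spike
  split_ifs
  exacts [EReal.coe_lt_top a, bot_lt_top]

theorem lintegral_expE_spike (a : ℝ) : ∫⁻ x, expE (spike a x) = 0 := by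
  have hzero : (fun x => expE (spike a x)) =ᵐ[volume] 0 := by
    filter_upwards [Measure.ae_ne volume (0 : ℝ)] with x hx
    simp [spike, hx, expE]
  rw [lintegral_congr_ae hzero, lintegral_zero_fun]

theorem Psi_spike {μ : Measure ℝ} [IsFiniteMeasure μ] {θ : ℝ} (h : ∀ᵐ x ∂μ, x = θ) (a : ℝ) :
    Psi θ (spike a) μ = ((a * μ.real univ : ℝ) : EReal) := by
  have hconst : (fun x => spike a (x - θ)) =ᵐ[μ] fun _ => (a : EReal) := by
    filter_upwards [h] with x hx
    simp [spike, hx]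
  rw [Psi, lintegral_expE_spike, eIntegral_congr_ae hconst, eIntegral_coe (integrable_const a)]
  simp [mul_comm]

theorem Ltheta_eq_top {μ : Measure ℝ} [IsFiniteMeasure μ] [NeZero μ] {θ : ℝ}
    (h : ∀ᵐ x ∂μ, x = θ) : Ltheta θ μ = ⊤ := by
  have hpos : 0 < μ.real univ := measureReal_univ_pos
  refine (EReal.eq_top_iff_forall_lt _).2 fun y => ?_
  have hy : y < (y + 1) / μ.real univ * μ.real univ := by
    rw [div_mul_cancel₀ _ hpos.ne']
    exact lt_add_one y
  calc (y : EReal) < Psi θ (spike ((y + 1) / μ.real univ)) μ := by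
        rw [Psi_spike h]
        exact EReal.coe_lt_coe_iff.2 hy
    _ ≤ Ltheta θ μ := le_iSup₂_of_le _ (memSC0_spike _) le_rfl

end PointMass

theorem statement0_general (μ : Measure ℝ) [IsFiniteMeasure μ] :
    Continuous fun θ : ℝ => Ltheta θ μ := by
  refine continuous_iff_lower_upperSemicontinuous.2 ⟨lowerSemicontinuous_Ltheta μ, fun θ₀ => ?_⟩
  by_cases hμ : ∀ᵐ x ∂μ, x = θ₀
  · rcases eq_zero_or_neZero μ with rfl | _
    · simp [Ltheta, Psi, eIntegral, upperSemicontinuousAt_const]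
    · intro b hb
      simp [Ltheta_eq_top hμ] at hb
  · exact upperSemicontinuousAt_Ltheta hμ

/-- If the distribution `μ` satisfies Condition A, then
`θ ↦ L(θ; F) = sup_{ψ ∈ SC₀} Ψ(θ, ψ, F)` is continuous on `ℝ`. -/
theorem statement0 (μ : Measure ℝ) (hA : CondA μ) :
    Continuous fun θ : ℝ => Ltheta θ μ :=
  have := hA.1
  statement0_general μ
end

section
/- Let X₁, …, Xₙ be real numbers that are not all equal, with empirical distribution function 𝔽ₙ, and let θ̂ ∈ ℝ be a maximizer of θ ↦ sup_{ψ ∈ SC₀} Ψₙ(θ, ψ). Let ψ ∈ SC₀ with ∫_ℝ e^{ψ(x)} dx = 1 and set g = e^{ψ}. Then (θ̂, ψ) maximizes Ψₙ over ℝ × SC₀ if and only if for every function Δ : ℝ → ℝ such that ψ + tΔ ∈ SC₀ for some t > 0, one has ∫ Δ(x − θ̂) d𝔽ₙ(x) ≤ ∫_ℝ Δ(x) g(x) dx. -/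
open MeasureTheory Filter Set
open scoped ENNReal NNReal

theorem eConcave_iff_concaveOn {φ : ℝ → EReal} (hφ : ∀ x, φ x < ⊤) :
    EConcave φ ↔ ConcaveOn ℝ {x | φ x ≠ ⊥} fun x => (φ x).toReal := by
  have coe_toReal {x : ℝ} (hx : φ x ≠ ⊥) : ((φ x).toReal : EReal) = φ x :=
    EReal.coe_toReal (hφ x).ne hx
  have coe_combination {x y : ℝ} (hx : φ x ≠ ⊥) (hy : φ y ≠ ⊥) (a b : ℝ) :
      ((a * (φ x).toReal + b * (φ y).toReal : ℝ) : EReal) = a * φ x + b * φ y := by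
    rw [EReal.coe_add, EReal.coe_mul, EReal.coe_mul, coe_toReal hx, coe_toReal hy]
  constructor
  · intro h
    have le_apply {x y : ℝ} (hx : φ x ≠ ⊥) (hy : φ y ≠ ⊥) {a b : ℝ} (ha : 0 ≤ a) (hb : 0 ≤ b)
        (hab : a + b = 1) :
        ((a * (φ x).toReal + b * (φ y).toReal : ℝ) : EReal) ≤ φ (a * x + b * y) := by
      rw [coe_combination hx hy, eq_sub_of_add_eq' hab]
      exact h x y a ha (by linarith)
    have ne_bot {x y : ℝ} (hx : φ x ≠ ⊥) (hy : φ y ≠ ⊥) {a b : ℝ} (ha : 0 ≤ a) (hb : 0 ≤ b)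
        (hab : a + b = 1) : φ (a * x + b * y) ≠ ⊥ :=
      ((EReal.bot_lt_coe _).trans_le (le_apply hx hy ha hb hab)).ne'
    refine ⟨fun x hx y hy a b ha hb hab => ne_bot hx hy ha hb hab,
      fun x hx y hy a b ha hb hab => ?_⟩
    simpa only [smul_eq_mul, EReal.toReal_coe] using
      EReal.toReal_le_toReal (le_apply hx hy ha hb hab) (EReal.coe_ne_bot _) (hφ _).ne
  · intro h x y t ht₀ ht₁
    rcases ht₀.eq_or_lt with rfl | ht₀
    · simp
    rcases ht₁.eq_or_lt with rfl | ht₁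
    · simp
    by_cases hx : φ x = ⊥
    · simp [hx, EReal.coe_mul_bot_of_pos ht₀]
    by_cases hy : φ y = ⊥
    · simp only [hy, EReal.coe_mul_bot_of_pos (sub_pos.2 ht₁), EReal.add_bot, bot_le]
    have hsum : t + (1 - t) = 1 := add_sub_cancel t 1
    have hxy : φ (t * x + (1 - t) * y) ≠ ⊥ := h.1 hx hy ht₀.le (sub_pos.2 ht₁).le hsum
    rw [← coe_combination hx hy, ← coe_toReal hxy, EReal.coe_le_coe_iff]
    exact h.2 hx hy ht₀.le (sub_pos.2 ht₁).le hsum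

/-- The restriction of `φ` to `[-M, M]` in the sense of convex analysis, with value `-∞` elsewhere:
the competitor that drops the mass of `e^φ` outside `[-M, M]`. -/
noncomputable def restrictAbsLE (φ : ℝ → EReal) (M x : ℝ) : EReal :=
  if |x| ≤ M then φ x else ⊥

theorem restrictAbsLE_of_le {φ : ℝ → EReal} {M x : ℝ} (hx : |x| ≤ M) :
    restrictAbsLE φ M x = φ x := if_pos hx

theorem restrictAbsLE_of_lt {φ : ℝ → EReal} {M x : ℝ} (hx : M < |x|) :
    restrictAbsLE φ M x = ⊥ := if_neg hx.not_ge

/-- The measure `e^{φ(x)} dx`, whose total mass is the term subtracted in `Ψ`. -/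
noncomputable def expMeasure (φ : ℝ → EReal) : Measure ℝ := volume.withDensity fun x => expE (φ x)

theorem expMeasure_univ (φ : ℝ → EReal) : expMeasure φ univ = ∫⁻ x, expE (φ x) := by
  rw [expMeasure, withDensity_apply _ MeasurableSet.univ, Measure.restrict_univ]

theorem isFiniteMeasure_expMeasure {φ : ℝ → EReal} (hφ : ∫⁻ x, expE (φ x) ≠ ⊤) :
    IsFiniteMeasure (expMeasure φ) :=
  isFiniteMeasure_withDensity hφ

theorem gReal_nonneg (φ : ℝ → EReal) (x : ℝ) : 0 ≤ gReal φ x := ENNReal.toReal_nonneg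

theorem gReal_of_eq_bot {φ : ℝ → EReal} {x : ℝ} (hx : φ x = ⊥) : gReal φ x = 0 := by
  simp [gReal, expE, hx]

namespace memSC0

variable {φ ψ : ℝ → EReal} {M x y : ℝ}

theorem ne_top (hφ : memSC0 φ) (x : ℝ) : φ x ≠ ⊤ := (hφ.1 x).ne

theorem upperSemicontinuous (hφ : memSC0 φ) : UpperSemicontinuous φ := hφ.2.2.1

theorem measurable (hφ : memSC0 φ) : Measurable φ := hφ.upperSemicontinuous.measurable

theorem concaveOn (hφ : memSC0 φ) : ConcaveOn ℝ {x | φ x ≠ ⊥} fun x => (φ x).toReal :=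
  (eConcave_iff_concaveOn hφ.1).1 hφ.2.2.2.1

theorem apply_neg (hφ : memSC0 φ) (x : ℝ) : φ (-x) = φ x := hφ.2.2.2.2 x

theorem apply_abs_s4 (hφ : memSC0 φ) (x : ℝ) : φ |x| = φ x := by
  rcases abs_choice x with h | h <;> simp [h, hφ.apply_neg]

theorem apply_le_of_abs_le (hφ : memSC0 φ) (hxy : |y| ≤ |x|) : φ x ≤ φ y := by
  by_cases hx : φ x = ⊥
  · simp [hx]
  have hx_pos : φ |x| ≠ ⊥ := by rwa [hφ.apply_abs_s4]
  have hx_neg : φ (-|x|) ≠ ⊥ := by rwa [hφ.apply_neg]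
  have hy : y ∈ Icc (-|x|) |x| := abs_le.1 hxy
  have hy_ne_bot : φ y ≠ ⊥ := hφ.concaveOn.1.ordConnected.out hx_neg hx_pos hy
  rw [← EReal.coe_toReal (hφ.ne_top x) hx, ← EReal.coe_toReal (hφ.ne_top y) hy_ne_bot,
    EReal.coe_le_coe_iff]
  simpa only [hφ.apply_neg, hφ.apply_abs_s4, min_self] using
    hφ.concaveOn.min_le_of_mem_Icc hx_neg hx_pos hy

theorem ne_bot_of_abs_le (hφ : memSC0 φ) (hx : φ x ≠ ⊥) (hxy : |y| ≤ |x|) : φ y ≠ ⊥ :=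
  ((bot_lt_iff_ne_bot.2 hx).trans_le (hφ.apply_le_of_abs_le hxy)).ne'

theorem apply_zero_ne_bot (hφ : memSC0 φ) : φ 0 ≠ ⊥ :=
  let ⟨_, hx⟩ := hφ.2.1
  hφ.ne_bot_of_abs_le hx (by simp)

theorem toReal_mem_Icc (hφ : memSC0 φ) (hM : φ M ≠ ⊥) (hx : |x| ≤ M) :
    (φ x).toReal ∈ Icc (φ M).toReal (φ 0).toReal := by
  have hxM : |x| ≤ |M| := hx.trans (le_abs_self M)
  have hx_ne_bot := hφ.ne_bot_of_abs_le hM hxM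
  exact ⟨EReal.toReal_le_toReal (hφ.apply_le_of_abs_le hxM) hM (hφ.ne_top x),
    EReal.toReal_le_toReal (hφ.apply_le_of_abs_le (by simp)) hx_ne_bot (hφ.ne_top 0)⟩

theorem of_continuous_concaveOn {f : ℝ → ℝ} (hf : Continuous f) (hf_concave : ConcaveOn ℝ univ f)
    (hf_even : Function.Even f) : memSC0 fun x => (f x : EReal) := by
  refine ⟨fun x => EReal.coe_lt_top _, ⟨0, EReal.coe_ne_bot _⟩,
    (continuous_coe_real_ereal.comp hf).upperSemicontinuous, ?_, fun x => by simp only [hf_even x]⟩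
  rw [eConcave_iff_concaveOn fun x => EReal.coe_lt_top _]
  simpa using hf_concave

theorem const_mul (hφ : memSC0 φ) {a : ℝ} (ha : 0 < a) : memSC0 fun x => (a : EReal) * φ x := by
  have ha_pos : (0 : EReal) < a := EReal.coe_pos.2 ha
  have mul_eq_bot_iff (x : ℝ) : (a : EReal) * φ x = ⊥ ↔ φ x = ⊥ := by
    simp [EReal.mul_eq_bot, ha_pos, ha_pos.not_gt]
  have lt_top (x : ℝ) : (a : EReal) * φ x < ⊤ := by
    simp [lt_top_iff_ne_top, EReal.mul_eq_top, ha_pos, ha_pos.not_gt, hφ.ne_top]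
  have continuous_mul : Continuous fun y : EReal => (a : EReal) * y :=
    continuous_iff_continuousAt.2 fun y =>
      (EReal.continuousAt_mul (p := ((a : EReal), y)) (.inl ha_pos.ne') (.inl ha_pos.ne')
        (.inl (EReal.coe_ne_bot a)) (.inl (EReal.coe_ne_top a))).comp (by fun_prop)
  refine ⟨lt_top, ⟨0, (mul_eq_bot_iff 0).not.2 hφ.apply_zero_ne_bot⟩,
    continuous_mul.comp_upperSemicontinuous hφ.upperSemicontinuous
      fun y z hyz => mul_le_mul_of_nonneg_left hyz ha_pos.le, ?_,
    fun x => by simp only [hφ.apply_neg]⟩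
  rw [eConcave_iff_concaveOn lt_top]
  simp only [ne_eq, mul_eq_bot_iff, EReal.toReal_mul, EReal.toReal_coe]
  exact hφ.concaveOn.smul ha.le

theorem add (hφ : memSC0 φ) (hψ : memSC0 ψ) : memSC0 fun x => φ x + ψ x := by
  have lt_top (x : ℝ) : φ x + ψ x < ⊤ := EReal.add_lt_top (hφ.ne_top x) (hψ.ne_top x)
  have hdom : {x | φ x + ψ x ≠ ⊥} = {x | φ x ≠ ⊥} ∩ {x | ψ x ≠ ⊥} := by
    ext x
    simp [EReal.add_eq_bot_iff]
  refine ⟨lt_top, ⟨0, hdom.superset ⟨hφ.apply_zero_ne_bot, hψ.apply_zero_ne_bot⟩⟩,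
    hφ.upperSemicontinuous.add' hψ.upperSemicontinuous fun x =>
      EReal.continuousAt_add (.inl (hφ.ne_top x)) (.inr (hψ.ne_top x)),
    ?_, fun x => by simp only [hφ.apply_neg, hψ.apply_neg]⟩
  rw [eConcave_iff_concaveOn lt_top, hdom]
  have hconvex := hφ.concaveOn.1.inter hψ.concaveOn.1
  refine ((hφ.concaveOn.subset inter_subset_left hconvex).add
    (hψ.concaveOn.subset inter_subset_right hconvex)).congr fun x hx => ?_
  exact (EReal.toReal_add (hφ.ne_top x) hx.1 (hψ.ne_top x) hx.2).symm

theorem restrict (hφ : memSC0 φ) (hM : 0 ≤ M) : memSC0 (restrictAbsLE φ M) := by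
  have lt_top (x : ℝ) : restrictAbsLE φ M x < ⊤ := by
    unfold restrictAbsLE
    split_ifs
    exacts [hφ.1 x, bot_lt_top]
  have hdom : {x | restrictAbsLE φ M x ≠ ⊥} = {x | φ x ≠ ⊥} ∩ Icc (-M) M := by
    ext x
    simp [restrictAbsLE, abs_le, and_comm, and_left_comm]
  refine ⟨lt_top, ⟨0, hdom.superset ⟨hφ.apply_zero_ne_bot, by simpa using hM⟩⟩, ?_, ?_,
    fun x => by simp only [restrictAbsLE, abs_neg, hφ.apply_neg]⟩
  · rw [upperSemicontinuous_iff_isClosed_preimage]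
    intro c
    rcases eq_or_ne c ⊥ with rfl | hc
    · simp
    have : restrictAbsLE φ M ⁻¹' Ici c = Icc (-M) M ∩ φ ⁻¹' Ici c := by
      ext x
      by_cases hx : |x| ≤ M <;> simp [restrictAbsLE, ← abs_le, hx, hc]
    rw [this]
    exact isClosed_Icc.inter (hφ.upperSemicontinuous.isClosed_preimage c)
  · rw [eConcave_iff_concaveOn lt_top, hdom]
    refine (hφ.concaveOn.subset inter_subset_left
      (hφ.concaveOn.1.inter (convex_Icc _ _))).congr fun x hx => ?_
    simp only [restrictAbsLE_of_le (abs_le.2 hx.2)]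

theorem expE_ne_top (hφ : memSC0 φ) (x : ℝ) : expE (φ x) ≠ ⊤ := by
  simpa [expE_eq_exp] using hφ.ne_top x

theorem measurable_expE (hφ : memSC0 φ) : Measurable fun x => expE (φ x) := by
  rw [expE_eq_exp]
  exact EReal.measurable_exp.comp hφ.measurable

theorem gReal_of_ne_bot (hφ : memSC0 φ) (hx : φ x ≠ ⊥) : gReal φ x = Real.exp (φ x).toReal := by
  simp [gReal, expE, hx, hφ.ne_top x, Real.exp_nonneg]

theorem gReal_le_of_abs_le (hφ : memSC0 φ) (hxy : |y| ≤ |x|) : gReal φ x ≤ gReal φ y := by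
  refine ENNReal.toReal_mono (hφ.expE_ne_top y) ?_
  simpa only [expE_eq_exp, EReal.exp_le_exp_iff] using hφ.apply_le_of_abs_le hxy

theorem gReal_mul_gReal_zero_le_sq (hφ : memSC0 φ) (x : ℝ) :
    gReal φ x * gReal φ 0 ≤ gReal φ (x / 2) ^ 2 := by
  by_cases hx : φ x = ⊥
  · rw [gReal_of_eq_bot hx, zero_mul]
    positivity
  have h_half : φ (x / 2) ≠ ⊥ := hφ.ne_bot_of_abs_le hx (by
    rw [abs_div, abs_two]
    exact half_le_self (abs_nonneg x))
  have h_concave : (φ x).toReal / 2 + (φ 0).toReal / 2 ≤ (φ (x / 2)).toReal := by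
    simpa [div_eq_inv_mul] using hφ.concaveOn.2 hx hφ.apply_zero_ne_bot
      (by norm_num : (0 : ℝ) ≤ 2⁻¹) (by norm_num : (0 : ℝ) ≤ 2⁻¹) (by norm_num)
  rw [hφ.gReal_of_ne_bot hx, hφ.gReal_of_ne_bot hφ.apply_zero_ne_bot, hφ.gReal_of_ne_bot h_half,
    ← Real.exp_add, ← Real.exp_nat_mul, Real.exp_le_exp]
  push_cast
  linarith

theorem integral_expMeasure (hφ : memSC0 φ) (f : ℝ → ℝ) :
    ∫ x, f x ∂expMeasure φ = ∫ x, f x * gReal φ x := by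
  rw [expMeasure, integral_withDensity_eq_integral_toReal_smul hφ.measurable_expE
    (.of_forall fun x => (hφ.expE_ne_top x).lt_top)]
  simp only [smul_eq_mul, mul_comm, gReal]

theorem integrable_expMeasure_iff (hφ : memSC0 φ) {f : ℝ → ℝ} :
    Integrable f (expMeasure φ) ↔ Integrable fun x => f x * gReal φ x := by
  rw [expMeasure, integrable_withDensity_iff_integrable_smul' hφ.measurable_expE
    (.of_forall fun x => (hφ.expE_ne_top x).lt_top)]
  simp only [smul_eq_mul, mul_comm, gReal]

theorem ae_expMeasure_iff (hφ : memSC0 φ) {p : ℝ → Prop} :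
    (∀ᵐ x ∂expMeasure φ, p x) ↔ ∀ᵐ x, φ x ≠ ⊥ → p x := by
  rw [expMeasure, ae_withDensity_iff hφ.measurable_expE]
  simp only [expE_eq_exp, ne_eq, EReal.exp_eq_zero_iff]

theorem isFiniteMeasure_of_forall_lt_abs (hφ : memSC0 φ) (hM : ∀ x, M < |x| → φ x = ⊥) :
    IsFiniteMeasure (expMeasure φ) := by
  refine isFiniteMeasure_expMeasure (ne_top_of_le_ne_top (b :=
    ∫⁻ x, (Icc (-M) M).indicator (fun _ => expE (φ 0)) x) ?_ (lintegral_mono fun x => ?_))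
  · rw [lintegral_indicator_const measurableSet_Icc]
    exact ENNReal.mul_ne_top (hφ.expE_ne_top 0) (by simp)
  · by_cases hx : |x| ≤ M
    · rw [indicator_of_mem (show x ∈ Icc (-M) M from abs_le.1 hx), expE_eq_exp,
        EReal.exp_le_exp_iff]
      exact hφ.apply_le_of_abs_le (by simp)
    · simp [hM x (not_le.1 hx), expE]

theorem ne_bot_iff_abs_le (hφ : memSC0 φ) (hM : φ M ≠ ⊥) (hM₀ : 0 ≤ M)
    (h_ae : ∀ᵐ x ∂expMeasure φ, |x| ≤ M) (x : ℝ) : φ x ≠ ⊥ ↔ |x| ≤ M := by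
  refine ⟨fun hx => not_lt.1 fun hMx => ?_,
    fun hx => hφ.ne_bot_of_abs_le hM (hx.trans (le_abs_self M))⟩
  have hsub : Ioo M |x| ⊆ {y | ¬(φ y ≠ ⊥ → |y| ≤ M)} := fun y hy h => by
    have hy_abs : |y| = y := abs_of_nonneg (hM₀.trans hy.1.le)
    have hy_ne_bot := hφ.ne_bot_of_abs_le hx (hy_abs.trans_le hy.2.le)
    exact (hy.1.trans_eq hy_abs.symm).not_ge (h hy_ne_bot)
  have h_null := measure_mono_null hsub (ae_iff.1 (hφ.ae_expMeasure_iff.1 h_ae))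
  rw [Real.volume_Ioo, ENNReal.ofReal_eq_zero, sub_nonpos] at h_null
  exact hMx.not_ge h_null

theorem abs_mul_gReal_half_le_integral (hφ : memSC0 φ) (hg : Integrable (gReal φ)) (x : ℝ) :
    |x| * gReal φ (x / 2) ≤ ∫ y, gReal φ y := by
  calc |x| * gReal φ (x / 2)
      = ∫ _ in Icc (-(|x| / 2)) (|x| / 2), gReal φ (x / 2) := by simp
    _ ≤ ∫ y in Icc (-(|x| / 2)) (|x| / 2), gReal φ y := by
        refine setIntegral_mono_on (integrableOn_const (by simp)) hg.integrableOn
          measurableSet_Icc fun y hy => hφ.gReal_le_of_abs_le ?_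
        rw [abs_div, abs_two]
        exact abs_le.2 hy
    _ ≤ ∫ y, gReal φ y := setIntegral_le_integral hg (.of_forall (gReal_nonneg φ))

theorem integrable_abs_expMeasure (hφ : memSC0 φ) [IsFiniteMeasure (expMeasure φ)] :
    Integrable (fun x => |x|) (expMeasure φ) := by
  have hg : Integrable (gReal φ) := by
    simpa using hφ.integrable_expMeasure_iff.1 (integrable_const (1 : ℝ))
  have hg_zero : 0 < gReal φ 0 := by
    rw [hφ.gReal_of_ne_bot hφ.apply_zero_ne_bot]
    exact Real.exp_pos _
  have hg_meas : Measurable (gReal φ) := hφ.measurable_expE.ennreal_toReal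
  rw [hφ.integrable_expMeasure_iff]
  refine ((hg.comp_div two_ne_zero).const_mul ((∫ y, gReal φ y) / gReal φ 0)).mono'
    (by fun_prop) (.of_forall fun x => ?_)
  rw [Real.norm_of_nonneg (mul_nonneg (abs_nonneg x) (gReal_nonneg φ x)), div_mul_eq_mul_div,
    le_div_iff₀ hg_zero]
  -- Midpoint concavity controls `g x` by a square, and one factor `g (x / 2)` absorbs `|x|`.
  calc |x| * gReal φ x * gReal φ 0
      = |x| * (gReal φ x * gReal φ 0) := mul_assoc _ _ _
    _ ≤ |x| * gReal φ (x / 2) ^ 2 := by gcongr; exact hφ.gReal_mul_gReal_zero_le_sq x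
    _ = |x| * gReal φ (x / 2) * gReal φ (x / 2) := by ring
    _ ≤ (∫ y, gReal φ y) * gReal φ (x / 2) :=
        mul_le_mul_of_nonneg_right (hφ.abs_mul_gReal_half_le_integral hg x) (gReal_nonneg φ _)

end memSC0

theorem expMeasure_restrictAbsLE (φ : ℝ → EReal) (M : ℝ) :
    expMeasure (restrictAbsLE φ M) = (expMeasure φ).restrict (Icc (-M) M) := by
  rw [expMeasure, expMeasure, restrict_withDensity measurableSet_Icc,
    ← withDensity_indicator measurableSet_Icc]
  congr 1
  ext x
  by_cases hx : |x| ≤ M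
  · rw [restrictAbsLE_of_le hx, indicator_of_mem (show x ∈ Icc (-M) M from abs_le.1 hx)]
  · rw [restrictAbsLE_of_lt (not_le.1 hx), expE_eq_exp, EReal.exp_bot,
      indicator_of_notMem (show x ∉ Icc (-M) M from fun h => hx (abs_le.2 h))]

/-- The segment `s ↦ (1 - s) ψ + s φ` joining `ψ` to `φ`, along which `Ψ` is differentiated. -/
noncomputable def eLineMap (ψ φ : ℝ → EReal) (s x : ℝ) : EReal :=
  ((1 - s : ℝ) : EReal) * ψ x + (s : EReal) * φ x

/-- The logarithm of the density ratio `e^φ / e^ψ`, the direction of the segment from `ψ` to `φ`.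
It is meaningful only where both functions are finite. -/
noncomputable def logRatio (φ ψ : ℝ → EReal) (x : ℝ) : ℝ := (φ x).toReal - (ψ x).toReal

theorem eLineMap_of_eq_bot {φ ψ : ℝ → EReal} {s x : ℝ} (hs : s < 1) (hx : ψ x = ⊥) :
    eLineMap ψ φ s x = ⊥ := by
  rw [eLineMap, hx, EReal.coe_mul_bot_of_pos (sub_pos.2 hs), EReal.bot_add]

namespace memSC0

variable {φ ψ : ℝ → EReal} {M s x : ℝ}

theorem lineMap (hψ : memSC0 ψ) (hφ : memSC0 φ) (hs₀ : 0 < s) (hs₁ : s < 1) :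
    memSC0 (eLineMap ψ φ s) :=
  (hψ.const_mul (sub_pos.2 hs₁)).add (hφ.const_mul hs₀)

theorem eLineMap_eq_coe (hψ : memSC0 ψ) (hφ : memSC0 φ) (hψx : ψ x ≠ ⊥) (hφx : φ x ≠ ⊥)
    (s : ℝ) :
    eLineMap ψ φ s x = (((ψ x).toReal + s * logRatio φ ψ x : ℝ) : EReal) := by
  have : (ψ x).toReal + s * logRatio φ ψ x = (1 - s) * (ψ x).toReal + s * (φ x).toReal := by
    rw [logRatio]
    ring
  rw [this, EReal.coe_add, EReal.coe_mul, EReal.coe_mul, EReal.coe_toReal (hψ.ne_top x) hψx,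
    EReal.coe_toReal (hφ.ne_top x) hφx, eLineMap]

theorem measurable_logRatio (hφ : memSC0 φ) (hψ : memSC0 ψ) : Measurable (logRatio φ ψ) :=
  hφ.measurable.ereal_toReal.sub hψ.measurable.ereal_toReal

theorem add_logRatio (hφ : memSC0 φ) (hψ : memSC0 ψ) (hφx : φ x ≠ ⊥) (hψx : ψ x ≠ ⊥) :
    ψ x + (logRatio φ ψ x : EReal) = φ x := by
  rw [← EReal.coe_toReal (hψ.ne_top x) hψx, ← EReal.coe_add, logRatio, add_sub_cancel,
    EReal.coe_toReal (hφ.ne_top x) hφx]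

theorem logRatio_mem_Icc (hφ : memSC0 φ) (hψ : memSC0 ψ) (hφM : φ M ≠ ⊥) (hψM : ψ M ≠ ⊥)
    (hx : |x| ≤ M) :
    logRatio φ ψ x ∈ Icc ((φ M).toReal - (ψ 0).toReal) ((φ 0).toReal - (ψ M).toReal) := by
  have hφx := hφ.toReal_mem_Icc hφM hx
  have hψx := hψ.toReal_mem_Icc hψM hx
  exact ⟨sub_le_sub hφx.1 hψx.2, sub_le_sub hφx.2 hψx.1⟩

theorem expMeasure_real_ne_bot_eq_integral_exp (hφ : memSC0 φ) (hψ : memSC0 ψ)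
    (h : ∀ x, ψ x ≠ ⊥ → φ x ≠ ⊥) :
    (expMeasure φ).real {x | ψ x ≠ ⊥} = ∫ x, Real.exp (logRatio φ ψ x) ∂expMeasure ψ := by
  have hS : MeasurableSet {x | ψ x ≠ ⊥} := hψ.measurable (measurableSet_singleton ⊥).compl
  rw [← integral_indicator_one hS, hφ.integral_expMeasure, hψ.integral_expMeasure]
  congr with x
  by_cases hx : ψ x = ⊥
  · simp [hx, gReal_of_eq_bot hx]
  · rw [indicator_of_mem (show x ∈ {x | ψ x ≠ ⊥} from hx), Pi.one_apply, one_mul,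
      hφ.gReal_of_ne_bot (h x hx), hψ.gReal_of_ne_bot hx, ← Real.exp_add, logRatio, sub_add_cancel]

end memSC0

section Criterion

variable {μ : Measure ℝ} {f : ℝ → EReal}

theorem eIntegral_eq_coe_integral (hf : Integrable (fun x => (f x).toReal) μ)
    (h_top : ∀ x, f x ≠ ⊤) (h_bot : ∀ᵐ x ∂μ, f x ≠ ⊥) :
    eIntegral μ f = ((∫ x, (f x).toReal ∂μ : ℝ) : EReal) := by
  have h_pos : ∫⁻ x, toENN (f x) ∂μ = ∫⁻ x, ENNReal.ofReal (f x).toReal ∂μ :=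
    lintegral_congr fun x => EReal.toENNReal_of_ne_top (h_top x)
  have h_neg : ∫⁻ x, toENN (-f x) ∂μ = ∫⁻ x, ENNReal.ofReal (-(f x).toReal) ∂μ := by
    refine lintegral_congr_ae (h_bot.mono fun x hx => ?_)
    have h_ne_top : -f x ≠ ⊤ := by simpa using hx
    exact (EReal.toENNReal_of_ne_top h_ne_top).trans (by simp)
  have h_neg_ne_top : ∫⁻ x, ENNReal.ofReal (-(f x).toReal) ∂μ ≠ ⊤ := hf.neg.lintegral_lt_top.ne
  rw [eIntegral, h_pos, h_neg, integral_eq_lintegral_pos_part_sub_lintegral_neg_part hf,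
    EReal.coe_sub, EReal.coe_ennreal_toReal hf.lintegral_lt_top.ne,
    EReal.coe_ennreal_toReal h_neg_ne_top]

theorem eIntegral_eq_bot (hf : Measurable f) (h_bot : ¬∀ᵐ x ∂μ, f x ≠ ⊥) :
    eIntegral μ f = ⊥ := by
  have h_neg : ∫⁻ x, toENN (-f x) ∂μ = ⊤ := by
    by_contra h
    rw [toENN_eq_toENNReal] at h
    refine h_bot ((ae_lt_top hf.neg.ereal_toENNReal h).mono fun x hx => ?_)
    simpa using hx.ne
  rw [eIntegral, h_neg, EReal.coe_ennreal_top, EReal.sub_top]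

end Criterion

/-- The closed ball of radius `M` about `θ` carries `μ`, and its boundary is charged by `μ`.
For an empirical measure `M` is the largest distance from `θ` to an observation. -/
structure HasChargedRadius (μ : Measure ℝ) (θ M : ℝ) : Prop where
  ae_abs_sub_le : ∀ᵐ x ∂μ, |x - θ| ≤ M
  measure_abs_sub_eq : μ {x | |x - θ| = M} ≠ 0

namespace HasChargedRadius

variable {μ : Measure ℝ} {θ M : ℝ} {φ ψ : ℝ → EReal}

theorem nonneg (hμ : HasChargedRadius μ θ M) : 0 ≤ M :=
  let ⟨x, hx⟩ := nonempty_of_measure_ne_zero hμ.measure_abs_sub_eq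
  (abs_nonneg (x - θ)).trans_eq hx

theorem ae_ne_bot_iff (hμ : HasChargedRadius μ θ M) (hφ : memSC0 φ) :
    (∀ᵐ x ∂μ, φ (x - θ) ≠ ⊥) ↔ φ M ≠ ⊥ := by
  constructor
  · contrapose
    intro hM h_ae
    refine hμ.measure_abs_sub_eq (measure_mono_null (fun x hx => ?_) (ae_iff.1 h_ae))
    have hx_abs : φ (x - θ) = φ M := by rw [← hφ.apply_abs_s4, show |x - θ| = M from hx]
    exact not_not.2 (hx_abs.trans hM)
  · exact fun hM => hμ.ae_abs_sub_le.mono fun x hx =>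
      hφ.ne_bot_of_abs_le hM (hx.trans (le_abs_self M))

theorem integrable_toReal [IsFiniteMeasure μ] (hμ : HasChargedRadius μ θ M) (hφ : memSC0 φ)
    (hM : φ M ≠ ⊥) : Integrable (fun x => (φ (x - θ)).toReal) μ :=
  .of_mem_Icc _ _ (hφ.measurable.comp (measurable_sub_const θ)).ereal_toReal.aemeasurable
    (hμ.ae_abs_sub_le.mono fun _ hx => hφ.toReal_mem_Icc hM hx)

theorem Psi_eq_coe [IsFiniteMeasure μ] (hμ : HasChargedRadius μ θ M) (hφ : memSC0 φ)
    [IsFiniteMeasure (expMeasure φ)] (hM : φ M ≠ ⊥) :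
    Psi θ φ μ =
      ((∫ x, (φ (x - θ)).toReal ∂μ - (expMeasure φ).real univ : ℝ) : EReal) := by
  rw [Psi, eIntegral_eq_coe_integral (hμ.integrable_toReal hφ hM) (fun x => hφ.ne_top (x - θ))
    ((hμ.ae_ne_bot_iff hφ).2 hM), ← expMeasure_univ, EReal.coe_sub, measureReal_def,
    EReal.coe_ennreal_toReal (measure_ne_top _ _)]

theorem Psi_eq_bot (hμ : HasChargedRadius μ θ M) (hφ : memSC0 φ) (hM : φ M = ⊥) :
    Psi θ φ μ = ⊥ := by
  have h_meas : Measurable fun x => φ (x - θ) := hφ.measurable.comp (measurable_sub_const θ)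
  rw [Psi, eIntegral_eq_bot h_meas fun h => (hμ.ae_ne_bot_iff hφ).1 h hM, EReal.bot_sub]

end HasChargedRadius

theorem le_of_hasDerivAt_of_mul_le_sub {f : ℝ → ℝ} {f' c : ℝ} (hf : HasDerivAt f f' 0)
    (h : ∀ s ∈ Ioo (0 : ℝ) 1, s * c ≤ f s - f 0) : c ≤ f' := by
  refine ge_of_tendsto hf.tendsto_slope_zero_right ?_
  filter_upwards [Ioo_mem_nhdsGT one_pos] with s hs
  rw [zero_add, smul_eq_mul, ← div_eq_inv_mul, le_div_iff₀' hs.1]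
  exact h s hs

namespace memSC0

variable {φ ψ : ℝ → EReal} {M s : ℝ}

theorem expMeasure_eLineMap_real_univ (hψ : memSC0 ψ) (hφ : memSC0 φ)
    (h : ∀ x, ψ x ≠ ⊥ → φ x ≠ ⊥) (hs₀ : 0 < s) (hs₁ : s < 1) :
    (expMeasure (eLineMap ψ φ s)).real univ =
      ProbabilityTheory.mgf (logRatio φ ψ) (expMeasure ψ) s := by
  have hχ : memSC0 (eLineMap ψ φ s) := hψ.lineMap hφ hs₀ hs₁
  have hχ_ne_bot (x : ℝ) (hx : ψ x ≠ ⊥) : eLineMap ψ φ s x ≠ ⊥ := by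
    rw [hψ.eLineMap_eq_coe hφ hx (h x hx)]
    exact EReal.coe_ne_bot _
  have h_univ : univ =ᵐ[expMeasure (eLineMap ψ φ s)] {x | ψ x ≠ ⊥} :=
    (eventuallyEq_univ.2 (hχ.ae_expMeasure_iff.2
      (.of_forall fun x => mt (eLineMap_of_eq_bot hs₁)))).symm
  rw [measureReal_congr h_univ, hχ.expMeasure_real_ne_bot_eq_integral_exp hψ hχ_ne_bot]
  refine integral_congr_ae (hψ.ae_expMeasure_iff.2 (.of_forall fun x hx => ?_))
  simp only [logRatio, hψ.eLineMap_eq_coe hφ hx (h x hx), EReal.toReal_coe, add_sub_cancel_left]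

theorem ae_logRatio_mem_Icc (hφ : memSC0 φ) (hψ : memSC0 ψ)
    (hdom : ∀ x, ψ x ≠ ⊥ → |x| ≤ M) (hφM : φ M ≠ ⊥) (hψM : ψ M ≠ ⊥) :
    ∀ᵐ x ∂expMeasure ψ,
      logRatio φ ψ x ∈ Icc ((φ M).toReal - (ψ 0).toReal) ((φ 0).toReal - (ψ M).toReal) :=
  hψ.ae_expMeasure_iff.2
    (.of_forall fun x hx => hφ.logRatio_mem_Icc hψ hφM hψM (hdom x hx))

theorem integral_logRatio_le (hφ : memSC0 φ) (hψ : memSC0 ψ) [IsFiniteMeasure (expMeasure φ)]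
    [IsFiniteMeasure (expMeasure ψ)] (h : ∀ x, ψ x ≠ ⊥ → φ x ≠ ⊥)
    (h_int : Integrable (logRatio φ ψ) (expMeasure ψ))
    (h_exp : Integrable (fun x => Real.exp (logRatio φ ψ x)) (expMeasure ψ)) :
    ∫ x, logRatio φ ψ x ∂expMeasure ψ ≤ (expMeasure φ).real univ - (expMeasure ψ).real univ :=
  calc ∫ x, logRatio φ ψ x ∂expMeasure ψ
      ≤ ∫ x, (Real.exp (logRatio φ ψ x) - 1) ∂expMeasure ψ :=
        integral_mono h_int (h_exp.sub (integrable_const 1))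
          fun x => le_sub_iff_add_le.2 (Real.add_one_le_exp _)
    _ = (expMeasure φ).real {x | ψ x ≠ ⊥} - (expMeasure ψ).real univ := by
        rw [integral_sub h_exp (integrable_const 1), integral_const, smul_eq_mul, mul_one,
          hφ.expMeasure_real_ne_bot_eq_integral_exp hψ h]
    _ ≤ (expMeasure φ).real univ - (expMeasure ψ).real univ :=
        sub_le_sub_right (measureReal_mono (subset_univ _)) _

end memSC0

/-- `ψ` satisfies the first-order optimality condition for maximizing `Ψ(θ, ·, μ)` over `SC₀`:
no feasible direction `Δ` increases the criterion to first order. As in the paper, `Δ` is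
real-valued, so it is unconstrained where `ψ` is `-∞`. -/
def FirstOrderOptimal (θ : ℝ) (ψ : ℝ → EReal) (μ : Measure ℝ) : Prop :=
  ∀ Δ : ℝ → ℝ, (∃ t : ℝ, 0 < t ∧ memSC0 fun x => ψ x + ((t * Δ x : ℝ) : EReal)) →
    ∫ x, Δ (x - θ) ∂μ ≤ ∫ x, Δ x * gReal ψ x

namespace HasChargedRadius

variable {μ : Measure ℝ} {θ M : ℝ} {φ ψ : ℝ → EReal}

theorem ne_bot_of_isMaxOn [IsFiniteMeasure μ] (hμ : HasChargedRadius μ θ M)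
    (hmax : IsMaxOn (fun φ => Psi θ φ μ) {φ | memSC0 φ} ψ) (hψ : memSC0 ψ) : ψ M ≠ ⊥ := by
  intro hM
  let χ : ℝ → EReal := restrictAbsLE (fun _ => ((0 : ℝ) : EReal)) M
  have hχ : memSC0 χ :=
    (memSC0.of_continuous_concaveOn continuous_const (concaveOn_const 0 convex_univ)
      fun _ => rfl).restrict hμ.nonneg
  have hχ_M : χ M ≠ ⊥ := by
    rw [show χ M = _ from restrictAbsLE_of_le (abs_of_nonneg hμ.nonneg).le]
    exact EReal.coe_ne_bot 0
  have : IsFiniteMeasure (expMeasure χ) :=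
    hχ.isFiniteMeasure_of_forall_lt_abs fun _ => restrictAbsLE_of_lt
  have hle : Psi θ χ μ ≤ Psi θ ψ μ := hmax hχ
  rw [hμ.Psi_eq_coe hχ hχ_M, hμ.Psi_eq_bot hψ hM, le_bot_iff] at hle
  exact EReal.coe_ne_bot _ hle

theorem ae_abs_le_of_isMaxOn [IsFiniteMeasure μ] (hμ : HasChargedRadius μ θ M)
    (hmax : IsMaxOn (fun φ => Psi θ φ μ) {φ | memSC0 φ} ψ) (hψ : memSC0 ψ)
    [IsFiniteMeasure (expMeasure ψ)] : ∀ᵐ x ∂expMeasure ψ, |x| ≤ M := by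
  have hψ_M := hμ.ne_bot_of_isMaxOn hmax hψ
  let χ := restrictAbsLE ψ M
  have hχ : memSC0 χ := hψ.restrict hμ.nonneg
  have hχ_eq {x : ℝ} (hx : |x| ≤ M) : χ x = ψ x := restrictAbsLE_of_le hx
  have hχ_M : χ M ≠ ⊥ := by rwa [hχ_eq (abs_of_nonneg hμ.nonneg).le]
  have hχ_exp : expMeasure χ = (expMeasure ψ).restrict (Icc (-M) M) := expMeasure_restrictAbsLE ψ M
  have : IsFiniteMeasure (expMeasure χ) := by
    rw [hχ_exp]
    infer_instance
  have h_integral : ∫ x, (χ (x - θ)).toReal ∂μ = ∫ x, (ψ (x - θ)).toReal ∂μ :=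
    integral_congr_ae (hμ.ae_abs_sub_le.mono fun x hx => congrArg EReal.toReal (hχ_eq hx))
  have hle : Psi θ χ μ ≤ Psi θ ψ μ := hmax hχ
  rw [hμ.Psi_eq_coe hχ hχ_M, hμ.Psi_eq_coe hψ hψ_M, EReal.coe_le_coe_iff, h_integral, hχ_exp,
    measureReal_restrict_apply_univ, sub_le_sub_iff_left] at hle
  have h_compl : (expMeasure ψ).real (Icc (-M) M)ᶜ = 0 :=
    le_antisymm ((measureReal_compl measurableSet_Icc).trans_le (sub_nonpos.2 hle))
      measureReal_nonneg
  rw [measureReal_eq_zero_iff] at h_compl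
  exact (measure_eq_zero_iff_ae_notMem.1 h_compl).mono fun x hx =>
    abs_le.2 (not_not.1 hx)

theorem ne_bot_iff_abs_le_of_isMaxOn [IsFiniteMeasure μ] (hμ : HasChargedRadius μ θ M)
    (hmax : IsMaxOn (fun φ => Psi θ φ μ) {φ | memSC0 φ} ψ) (hψ : memSC0 ψ)
    [IsFiniteMeasure (expMeasure ψ)] (x : ℝ) : ψ x ≠ ⊥ ↔ |x| ≤ M :=
  hψ.ne_bot_iff_abs_le (hμ.ne_bot_of_isMaxOn hmax hψ) hμ.nonneg
    (hμ.ae_abs_le_of_isMaxOn hmax hψ) x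

theorem ne_bot_of_firstOrderOptimal [IsFiniteMeasure μ] (hμ : HasChargedRadius μ θ M)
    (hopt : FirstOrderOptimal θ ψ μ) (hψ : memSC0 ψ) : ψ M ≠ ⊥ := by
  -- The indicator of `{ψ = -∞}` is a feasible direction along which `ψ` does not move.
  let Δ : ℝ → ℝ := {x | ψ x = ⊥}.indicator 1
  have h_add : (fun x => ψ x + ((1 * Δ x : ℝ) : EReal)) = ψ := by
    funext x
    by_cases hx : ψ x = ⊥ <;> simp [Δ, hx]
  have h_gReal (x : ℝ) : Δ x * gReal ψ x = 0 := by
    by_cases hx : ψ x = ⊥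
    · simp [gReal_of_eq_bot hx]
    · simp [Δ, hx]
  have h_le : ∫ x, Δ (x - θ) ∂μ ≤ 0 := by
    simpa [h_gReal] using hopt Δ ⟨1, one_pos, by rwa [h_add]⟩
  have hS : MeasurableSet {x | ψ (x - θ) = ⊥} :=
    (hψ.measurable.comp (measurable_sub_const θ)) (measurableSet_singleton ⊥)
  rw [← hμ.ae_ne_bot_iff hψ, ae_iff]
  have h_integral : ∫ x, Δ (x - θ) ∂μ = μ.real {x | ψ (x - θ) = ⊥} :=
    integral_indicator_one hS
  rw [h_integral] at h_le
  have h_null : μ.real {x | ψ (x - θ) = ⊥} = 0 := h_le.antisymm measureReal_nonneg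
  rw [measureReal_eq_zero_iff] at h_null
  simpa only [not_not] using h_null

theorem ae_abs_le_of_firstOrderOptimal (hμ : HasChargedRadius μ θ M)
    (hopt : FirstOrderOptimal θ ψ μ) (hψ : memSC0 ψ) [IsFiniteMeasure (expMeasure ψ)] :
    ∀ᵐ x ∂expMeasure ψ, |x| ≤ M := by
  -- The overshoot vanishes at the data, so moving against it must not reduce the mass of `e^ψ`.
  let overshoot : ℝ → ℝ := fun x => max (|x| - M) 0
  have h_nonneg : 0 ≤ overshoot := fun x => le_max_right _ _
  have h_concave : ConcaveOn ℝ univ (-overshoot) :=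
    (((convexOn_norm convex_univ).sub (concaveOn_const M convex_univ)).sup
      (convexOn_const 0 convex_univ)).neg
  have h_feasible : memSC0 fun x => ψ x + ((1 * -overshoot x : ℝ) : EReal) := by
    simp only [one_mul]
    exact hψ.add (memSC0.of_continuous_concaveOn (by fun_prop) h_concave
      fun x => by simp [overshoot])
  have h_integrable : Integrable overshoot (expMeasure ψ) :=
    (hψ.integrable_abs_expMeasure.sub (integrable_const M)).sup (integrable_const 0)
  have h_data : ∫ x, -overshoot (x - θ) ∂μ = 0 :=
    integral_eq_zero_of_ae (hμ.ae_abs_sub_le.mono fun x hx => by simpa [overshoot] using hx)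
  have h_le : ∫ x, overshoot x ∂expMeasure ψ ≤ 0 := by
    have := hopt (fun x => -overshoot x) ⟨1, one_pos, h_feasible⟩
    rwa [h_data, ← hψ.integral_expMeasure, integral_neg, neg_nonneg] at this
  have h_zero := (integral_eq_zero_iff_of_nonneg h_nonneg h_integrable).1
    (h_le.antisymm (integral_nonneg h_nonneg))
  exact h_zero.mono fun x hx => by simpa [overshoot] using hx

theorem ne_bot_iff_abs_le_of_firstOrderOptimal [IsFiniteMeasure μ] (hμ : HasChargedRadius μ θ M)
    (hopt : FirstOrderOptimal θ ψ μ) (hψ : memSC0 ψ) [IsFiniteMeasure (expMeasure ψ)] (x : ℝ) :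
    ψ x ≠ ⊥ ↔ |x| ≤ M :=
  hψ.ne_bot_iff_abs_le (hμ.ne_bot_of_firstOrderOptimal hopt hψ) hμ.nonneg
    (hμ.ae_abs_le_of_firstOrderOptimal hopt hψ) x

theorem integrable_logRatio [IsFiniteMeasure μ] (hμ : HasChargedRadius μ θ M) (hφ : memSC0 φ)
    (hψ : memSC0 ψ) (hφM : φ M ≠ ⊥) (hψM : ψ M ≠ ⊥) :
    Integrable (fun x => logRatio φ ψ (x - θ)) μ :=
  (hμ.integrable_toReal hφ hφM).sub (hμ.integrable_toReal hψ hψM)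

theorem integral_logRatio_eq_sub [IsFiniteMeasure μ] (hμ : HasChargedRadius μ θ M) (hφ : memSC0 φ)
    (hψ : memSC0 ψ) (hφM : φ M ≠ ⊥) (hψM : ψ M ≠ ⊥) :
    ∫ x, logRatio φ ψ (x - θ) ∂μ =
      ∫ x, (φ (x - θ)).toReal ∂μ - ∫ x, (ψ (x - θ)).toReal ∂μ :=
  integral_sub (hμ.integrable_toReal hφ hφM) (hμ.integrable_toReal hψ hψM)

theorem Psi_le_Psi_of_integral_logRatio_le [IsFiniteMeasure μ] (hμ : HasChargedRadius μ θ M)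
    (hφ : memSC0 φ) (hψ : memSC0 ψ) [IsFiniteMeasure (expMeasure ψ)]
    (hdom : ∀ x, ψ x ≠ ⊥ ↔ |x| ≤ M)
    (h_le : φ M ≠ ⊥ →
      ∫ x, logRatio φ ψ (x - θ) ∂μ ≤ ∫ x, logRatio φ ψ x ∂expMeasure ψ) :
    Psi θ φ μ ≤ Psi θ ψ μ := by
  by_cases hφM : φ M = ⊥
  · rw [hμ.Psi_eq_bot hφ hφM]
    exact bot_le
  by_cases hφ_mass : ∫⁻ x, expE (φ x) = ⊤
  · rw [Psi, hφ_mass, EReal.coe_ennreal_top, EReal.sub_top]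
    exact bot_le
  have := isFiniteMeasure_expMeasure hφ_mass
  have hψM : ψ M ≠ ⊥ := (hdom M).2 (abs_of_nonneg hμ.nonneg).le
  have hφ_ne_bot (x : ℝ) (hx : ψ x ≠ ⊥) : φ x ≠ ⊥ :=
    hφ.ne_bot_of_abs_le hφM (((hdom x).1 hx).trans (le_abs_self M))
  have h_mem := hφ.ae_logRatio_mem_Icc hψ (fun x => (hdom x).1) hφM hψM
  have h_meas := (hφ.measurable_logRatio hψ).aemeasurable (μ := expMeasure ψ)
  have h_exp : Integrable (fun x => Real.exp (logRatio φ ψ x)) (expMeasure ψ) := by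
    simpa only [one_mul] using
      ProbabilityTheory.integrable_exp_mul_of_mem_Icc (t := 1) h_meas h_mem
  have h_tangent := hφ.integral_logRatio_le hψ hφ_ne_bot (.of_mem_Icc _ _ h_meas h_mem) h_exp
  have h_score := h_le hφM
  rw [hμ.integral_logRatio_eq_sub hφ hψ hφM hψM] at h_score
  rw [hμ.Psi_eq_coe hφ hφM, hμ.Psi_eq_coe hψ hψM, EReal.coe_le_coe_iff]
  linarith

theorem mul_integral_logRatio_le_of_isMaxOn [IsFiniteMeasure μ] (hμ : HasChargedRadius μ θ M)
    (hmax : IsMaxOn (fun φ => Psi θ φ μ) {φ | memSC0 φ} ψ) (hφ : memSC0 φ) (hψ : memSC0 ψ)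
    [IsFiniteMeasure (expMeasure ψ)] (hdom : ∀ x, ψ x ≠ ⊥ ↔ |x| ≤ M) (hφM : φ M ≠ ⊥)
    {s : ℝ} (hs : s ∈ Ioo (0 : ℝ) 1) :
    s * ∫ x, logRatio φ ψ (x - θ) ∂μ ≤
      ProbabilityTheory.mgf (logRatio φ ψ) (expMeasure ψ) s - (expMeasure ψ).real univ := by
  have hψM : ψ M ≠ ⊥ := (hdom M).2 (abs_of_nonneg hμ.nonneg).le
  have hφ_ne_bot {x : ℝ} (hx : |x| ≤ M) : φ x ≠ ⊥ :=
    hφ.ne_bot_of_abs_le hφM (hx.trans (le_abs_self M))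
  let χ := eLineMap ψ φ s
  have hχ : memSC0 χ := hψ.lineMap hφ hs.1 hs.2
  have hχ_eq {x : ℝ} (hx : |x| ≤ M) : χ x = ((ψ x).toReal + s * logRatio φ ψ x : ℝ) :=
    hψ.eLineMap_eq_coe hφ ((hdom x).2 hx) (hφ_ne_bot hx) s
  have hχM : χ M ≠ ⊥ := by
    rw [hχ_eq (abs_of_nonneg hμ.nonneg).le]
    exact EReal.coe_ne_bot _
  have : IsFiniteMeasure (expMeasure χ) := hχ.isFiniteMeasure_of_forall_lt_abs fun x hx =>
    eLineMap_of_eq_bot hs.2 (not_not.1 (mt (hdom x).1 hx.not_ge))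
  have h_integral : ∫ x, (χ (x - θ)).toReal ∂μ =
      ∫ x, (ψ (x - θ)).toReal ∂μ + s * ∫ x, logRatio φ ψ (x - θ) ∂μ := by
    rw [← integral_const_mul, ← integral_add (hμ.integrable_toReal hψ hψM)
      ((hμ.integrable_logRatio hφ hψ hφM hψM).const_mul s)]
    exact integral_congr_ae (hμ.ae_abs_sub_le.mono fun x hx => by
      simp only [hχ_eq hx, EReal.toReal_coe])
  have hle : Psi θ χ μ ≤ Psi θ ψ μ := hmax hχ
  rw [hμ.Psi_eq_coe hχ hχM, hμ.Psi_eq_coe hψ hψM, EReal.coe_le_coe_iff, h_integral,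
    hψ.expMeasure_eLineMap_real_univ hφ (fun x hx => hφ_ne_bot ((hdom x).1 hx)) hs.1 hs.2] at hle
  linarith

theorem integral_logRatio_le_of_isMaxOn [IsFiniteMeasure μ] (hμ : HasChargedRadius μ θ M)
    (hmax : IsMaxOn (fun φ => Psi θ φ μ) {φ | memSC0 φ} ψ) (hφ : memSC0 φ) (hψ : memSC0 ψ)
    [IsFiniteMeasure (expMeasure ψ)] (hdom : ∀ x, ψ x ≠ ⊥ ↔ |x| ≤ M) (hφM : φ M ≠ ⊥) :
    ∫ x, logRatio φ ψ (x - θ) ∂μ ≤ ∫ x, logRatio φ ψ x ∂expMeasure ψ := by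
  have hψM : ψ M ≠ ⊥ := (hdom M).2 (abs_of_nonneg hμ.nonneg).le
  have h_mgf (t : ℝ) :
      Integrable (fun x => Real.exp (t * logRatio φ ψ x)) (expMeasure ψ) :=
    ProbabilityTheory.integrable_exp_mul_of_mem_Icc (hφ.measurable_logRatio hψ).aemeasurable
      (hφ.ae_logRatio_mem_Icc hψ (fun x => (hdom x).1) hφM hψM)
  have h_deriv : HasDerivAt (ProbabilityTheory.mgf (logRatio φ ψ) (expMeasure ψ))
      (∫ x, logRatio φ ψ x ∂expMeasure ψ) 0 := by
    simpa using ProbabilityTheory.hasDerivAt_mgf (X := logRatio φ ψ) (μ := expMeasure ψ) (t := 0)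
      (by simp [ProbabilityTheory.integrableExpSet, h_mgf])
  refine le_of_hasDerivAt_of_mul_le_sub h_deriv fun s hs => ?_
  rw [ProbabilityTheory.mgf_zero']
  exact hμ.mul_integral_logRatio_le_of_isMaxOn hmax hφ hψ hdom hφM hs

theorem isMaxOn_Psi_iff_integral_logRatio_le [IsFiniteMeasure μ] (hμ : HasChargedRadius μ θ M)
    (hψ : memSC0 ψ) [IsFiniteMeasure (expMeasure ψ)] (hdom : ∀ x, ψ x ≠ ⊥ ↔ |x| ≤ M) :
    IsMaxOn (fun φ => Psi θ φ μ) {φ | memSC0 φ} ψ ↔ ∀ φ, memSC0 φ → φ M ≠ ⊥ →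
      ∫ x, logRatio φ ψ (x - θ) ∂μ ≤ ∫ x, logRatio φ ψ x ∂expMeasure ψ :=
  ⟨fun hmax _ hφ hφM => hμ.integral_logRatio_le_of_isMaxOn hmax hφ hψ hdom hφM,
    fun h φ hφ => hμ.Psi_le_Psi_of_integral_logRatio_le hφ hψ hdom (h φ hφ)⟩

theorem firstOrderOptimal_iff_integral_logRatio_le (hμ : HasChargedRadius μ θ M) (hψ : memSC0 ψ)
    (hdom : ∀ x, ψ x ≠ ⊥ ↔ |x| ≤ M) :
    FirstOrderOptimal θ ψ μ ↔ ∀ φ, memSC0 φ → φ M ≠ ⊥ →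
      ∫ x, logRatio φ ψ (x - θ) ∂μ ≤ ∫ x, logRatio φ ψ x ∂expMeasure ψ := by
  simp only [FirstOrderOptimal, ← hψ.integral_expMeasure]
  constructor
  · intro h φ hφ hφM
    refine h (logRatio φ ψ) ⟨1, one_pos, ?_⟩
    convert hφ.restrict hμ.nonneg using 1
    funext x
    by_cases hx : |x| ≤ M
    · have hφx : φ x ≠ ⊥ := hφ.ne_bot_of_abs_le hφM (hx.trans (le_abs_self M))
      rw [restrictAbsLE_of_le hx, one_mul, hφ.add_logRatio hψ hφx ((hdom x).2 hx)]
    · rw [restrictAbsLE_of_lt (not_le.1 hx), not_not.1 (mt (hdom x).1 hx), EReal.bot_add]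
  · rintro h Δ ⟨t, ht, hφ⟩
    have hφ_ne_bot {x : ℝ} (hx : |x| ≤ M) : ψ x + ((t * Δ x : ℝ) : EReal) ≠ ⊥ :=
      EReal.add_ne_bot_iff.2 ⟨(hdom x).2 hx, EReal.coe_ne_bot _⟩
    have h_ratio {x : ℝ} (hx : |x| ≤ M) :
        logRatio (fun x => ψ x + ((t * Δ x : ℝ) : EReal)) ψ x = t * Δ x := by
      rw [logRatio, EReal.toReal_add (hψ.ne_top x) ((hdom x).2 hx) (EReal.coe_ne_top _)
        (EReal.coe_ne_bot _), EReal.toReal_coe, add_sub_cancel_left]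
    have hle := h _ hφ (hφ_ne_bot (abs_of_nonneg hμ.nonneg).le)
    rw [integral_congr_ae (hμ.ae_abs_sub_le.mono fun x hx => h_ratio hx),
      integral_congr_ae (hψ.ae_expMeasure_iff.2 (.of_forall fun x hx => h_ratio ((hdom x).1 hx))),
      integral_const_mul, integral_const_mul] at hle
    exact le_of_mul_le_mul_left hle ht

theorem isMaxOn_Psi_iff_firstOrderOptimal [IsFiniteMeasure μ] (hμ : HasChargedRadius μ θ M)
    (hψ : memSC0 ψ) [IsFiniteMeasure (expMeasure ψ)] :
    IsMaxOn (fun φ => Psi θ φ μ) {φ | memSC0 φ} ψ ↔ FirstOrderOptimal θ ψ μ := by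
  have iff_of_domain (hdom : ∀ x, ψ x ≠ ⊥ ↔ |x| ≤ M) :
      IsMaxOn (fun φ => Psi θ φ μ) {φ | memSC0 φ} ψ ↔ FirstOrderOptimal θ ψ μ :=
    (hμ.isMaxOn_Psi_iff_integral_logRatio_le hψ hdom).trans
      (hμ.firstOrderOptimal_iff_integral_logRatio_le hψ hdom).symm
  exact ⟨fun hmax => (iff_of_domain (hμ.ne_bot_iff_abs_le_of_isMaxOn hmax hψ)).1 hmax,
    fun hopt => (iff_of_domain (hμ.ne_bot_iff_abs_le_of_firstOrderOptimal hopt hψ)).2 hopt⟩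

end HasChargedRadius

theorem forall_Psi_le_iff_isMaxOn {μ : Measure ℝ} {θ : ℝ}
    (hθ : ∀ θ', Ltheta θ' μ ≤ Ltheta θ μ) {ψ : ℝ → EReal} :
    (∀ θ' ψ', memSC0 ψ' → Psi θ' ψ' μ ≤ Psi θ ψ μ) ↔
      IsMaxOn (fun φ => Psi θ φ μ) {φ | memSC0 φ} ψ :=
  ⟨fun h φ hφ => h θ φ hφ, fun h θ' _ hψ' =>
    (le_iSup₂_of_le _ hψ' le_rfl).trans ((hθ θ').trans (iSup₂_le h))⟩

theorem statement4_general {μ : Measure ℝ} [IsFiniteMeasure μ] {θhat M : ℝ}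
    (hμ : HasChargedRadius μ θhat M) (hθ : ∀ θ' : ℝ, Ltheta θ' μ ≤ Ltheta θhat μ)
    {ψ : ℝ → EReal} (hψ : memSC0 ψ) (hfin : (∫⁻ x, expE (ψ x)) ≠ ⊤) :
    (∀ (θ' : ℝ) (ψ' : ℝ → EReal), memSC0 ψ' → Psi θ' ψ' μ ≤ Psi θhat ψ μ) ↔
      ∀ Δ : ℝ → ℝ,
        (∃ t : ℝ, 0 < t ∧ memSC0 fun x => ψ x + ((t * Δ x : ℝ) : EReal)) →
        (∫ x, Δ (x - θhat) ∂μ) ≤ ∫ x, Δ x * gReal ψ x :=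
  have := isFiniteMeasure_expMeasure hfin
  (forall_Psi_le_iff_isMaxOn hθ).trans (hμ.isMaxOn_Psi_iff_firstOrderOptimal hψ)

theorem isFiniteMeasure_empMeas {n : ℕ} [NeZero n] (X : Fin n → ℝ) :
    IsFiniteMeasure (empMeas X) :=
  Measure.smul_finite _ (by simp [NeZero.ne n])

theorem ae_empMeas_iff {n : ℕ} (X : Fin n → ℝ) {p : ℝ → Prop} :
    (∀ᵐ x ∂empMeas X, p x) ↔ ∀ i, p (X i) := by
  rw [empMeas, Measure.ae_ennreal_smul_measure_iff (by simp)]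
  simp [ae_dirac_eq]

theorem exists_hasChargedRadius_empMeas {n : ℕ} [NeZero n] (X : Fin n → ℝ) (θ : ℝ) :
    ∃ M, HasChargedRadius (empMeas X) θ M := by
  obtain ⟨i, -, hi⟩ := Finset.univ.exists_max_image (fun i => |X i - θ|) Finset.univ_nonempty
  refine ⟨|X i - θ|, (ae_empMeas_iff X).2 fun j => hi j (Finset.mem_univ j), ?_⟩
  rw [Ne, measure_eq_zero_iff_ae_notMem, ae_empMeas_iff]
  exact fun h => h i rfl

/-- Characterization of the MLE: with `θ̂` a maximizer of
`θ ↦ sup_{ψ ∈ SC₀} Ψₙ(θ, ψ)` and `ψ ∈ SC₀` with `∫ e^ψ = 1`, `g = e^ψ`, the pair `(θ̂, ψ)`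
maximizes `Ψₙ` over `ℝ × SC₀` iff for every perturbation `Δ` with `ψ + tΔ ∈ SC₀` for some
`t > 0` one has `∫ Δ(x − θ̂) d𝔽ₙ(x) ≤ ∫ Δ(x) g(x) dx`. -/
theorem statement4 {n : ℕ} (X : Fin n → ℝ) (hne : ∃ i j, X i ≠ X j)
    (θhat : ℝ) (hθ : ∀ θ' : ℝ, Ltheta θ' (empMeas X) ≤ Ltheta θhat (empMeas X))
    (ψ : ℝ → EReal) (hψ : memSC0 ψ)
    (hdens : (∫⁻ x, expE (ψ x)) = 1) :
    (∀ (θ' : ℝ) (ψ' : ℝ → EReal), memSC0 ψ' →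
        Psi θ' ψ' (empMeas X) ≤ Psi θhat ψ (empMeas X)) ↔
      ∀ Δ : ℝ → ℝ,
        (∃ t : ℝ, 0 < t ∧ memSC0 fun x => ψ x + ((t * Δ x : ℝ) : EReal)) →
        (∫ x, Δ (x - θhat) ∂(empMeas X)) ≤ ∫ x, Δ x * gReal ψ x := by
  obtain ⟨i, _⟩ := hne
  have : NeZero n := ⟨i.pos.ne'⟩
  have := isFiniteMeasure_empMeas X
  obtain ⟨M, hM⟩ := exists_hasChargedRadius_empMeas X θhat
  exact statement4_general hM hθ hψ (hdens ▸ ENNReal.one_ne_top)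
end
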